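/- arXiv:1506.03729 — 12 statements merged into one kernel-verified Lean document; each statement's English description precedes it below -/
import Mathlib

section
/- Let k ≥ 1, let c₁, c₂ ∈ ℝ^k have all entries positive with c₁ ≠ c₂, and let p₁, p₂ > 0. Then there exist a constant C > 0 and n₀ ∈ ℕ such that for every integer n ≥ n₀, ∑_{x ∈ ℕ^k} min(p₁ · P_{c₁ ln n}(x), p₂ · P_{c₂ ln n}(x)) ≤ C · n^{−D₊(c₁,c₂)} · (ln n)^{−1/2}. -/
open scoped BigOperators

/-- Multivariate Poisson probability mass function on `ℕ^k` with mean vector `lam`. -/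
noncomputable def poissonPMF {k : ℕ} (lam : Fin k → ℝ) (x : Fin k → ℕ) : ℝ :=
  ∏ i, lam i ^ x i * Real.exp (-lam i) / (Nat.factorial (x i))

/-- The CH-divergence `D₊(μ, ν) = max_{t ∈ [0,1]} ∑ i (t μ i + (1-t) ν i − μ i ^ t ν i ^ (1-t))`. -/
noncomputable def CHdiv {k : ℕ} (μ ν : Fin k → ℝ) : ℝ :=
  sSup ((fun t : ℝ => ∑ i, (t * μ i + (1 - t) * ν i - μ i ^ t * ν i ^ (1 - t))) ''
    Set.Icc (0 : ℝ) 1)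

lemma pois_le_mode (lam : ℝ) (hl : 1 ≤ lam) (m : ℕ) :
    lam ^ m / (Nat.factorial m) ≤ lam ^ ⌊lam⌋₊ / (Nat.factorial ⌊lam⌋₊) := by
  have h0 : 0 < lam := by linarith
  set N := ⌊lam⌋₊ with hN
  have hNl : (N : ℝ) ≤ lam := Nat.floor_le h0.le
  have hNu : lam ≤ N + 1 := (Nat.lt_floor_add_one lam).le
  rw [div_le_div_iff₀ (by positivity) (by positivity)]
  rcases le_total m N with h | h
  · have h1 : Nat.factorial N ≤ Nat.factorial m * N ^ (N - m) := by
      rw [← Nat.factorial_mul_descFactorial (Nat.sub_le N m), Nat.sub_sub_self h]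
      exact Nat.mul_le_mul_left _ (Nat.descFactorial_le_pow _ _)
    have h2 : (Nat.factorial N : ℝ) ≤ Nat.factorial m * (N : ℝ) ^ (N - m) := by exact_mod_cast h1
    have h3 : (N : ℝ) ^ (N - m) ≤ lam ^ (N - m) := by gcongr
    calc lam ^ m * (Nat.factorial N : ℝ) ≤ lam ^ m * (Nat.factorial m * lam ^ (N - m)) := by
          gcongr
          exact h2.trans (by gcongr)
      _ = (lam ^ m * lam ^ (N - m)) * Nat.factorial m := by ring
      _ = _ := by rw [← pow_add, Nat.add_sub_cancel' h]
  · obtain ⟨d, rfl⟩ := Nat.exists_eq_add_of_le h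
    have h1 := @Nat.factorial_mul_pow_le_factorial N d
    have h2 : (Nat.factorial N : ℝ) * ((N : ℝ) + 1) ^ d ≤ Nat.factorial (N + d) := by
      exact_mod_cast h1
    have h3 : lam ^ d ≤ ((N : ℝ) + 1) ^ d := by gcongr
    calc lam ^ (N + d) * (Nat.factorial N : ℝ) = lam ^ N * (Nat.factorial N * lam ^ d) := by ring
      _ ≤ lam ^ N * (Nat.factorial (N + d)) := by
        gcongr
        exact le_trans (by gcongr) h2

lemma pois_le (lam : ℝ) (hl : 1 ≤ lam) (m : ℕ) :
    lam ^ m * Real.exp (-lam) / (Nat.factorial m) ≤ 1 / √lam := by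
  have h0 : 0 < lam := by linarith
  have hm := pois_le_mode lam hl m
  have hN1 : 1 ≤ ⌊lam⌋₊ := Nat.one_le_floor_iff _ |>.2 hl
  set N := ⌊lam⌋₊ with hN
  have hNu : lam ≤ N + 1 := (Nat.lt_floor_add_one lam).le
  have hN1' : (1 : ℝ) ≤ N := by exact_mod_cast hN1
  have hNpos : (0 : ℝ) < N := by linarith
  have hst := Stirling.le_factorial_stirling N
  have hkey : lam ^ N * Real.exp (-lam) ≤ ((N : ℝ) / Real.exp 1) ^ N := by
    have h1 : lam / N ≤ Real.exp (lam / N - 1) := by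
      have := Real.add_one_le_exp (lam / N - 1)
      linarith
    have h2 : (lam / N) ^ N ≤ Real.exp (lam / N - 1) ^ N := by gcongr
    rw [← Real.exp_nat_mul, mul_sub, mul_div_cancel₀ _ hNpos.ne', mul_one, Real.exp_sub,
      div_pow, div_le_div_iff₀ (by positivity) (by positivity)] at h2
    rw [div_pow, ← Real.exp_nat_mul, mul_one, Real.exp_neg, ← div_eq_mul_inv,
      div_le_div_iff₀ (by positivity) (by positivity)]
    linarith
  have hsq : √lam ≤ √(2 * Real.pi * N) := by
    apply Real.sqrt_le_sqrt
    nlinarith [Real.pi_gt_three]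
  have hs : 0 < √lam := Real.sqrt_pos.2 h0
  calc lam ^ m * Real.exp (-lam) / (Nat.factorial m)
      = lam ^ m / (Nat.factorial m) * Real.exp (-lam) := by ring
    _ ≤ lam ^ N / (Nat.factorial N) * Real.exp (-lam) := by gcongr
    _ = lam ^ N * Real.exp (-lam) / (Nat.factorial N) := by ring
    _ ≤ ((N : ℝ) / Real.exp 1) ^ N / (Nat.factorial N) := by gcongr
    _ ≤ 1 / √lam := by
      rw [div_le_div_iff₀ (by positivity) hs]
      calc _ = √lam * ((N : ℝ) / Real.exp 1) ^ N := by ring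
        _ ≤ √(2 * Real.pi * N) * ((N : ℝ) / Real.exp 1) ^ N := by gcongr
        _ ≤ _ := by linarith

lemma expsum (a b : ℝ) (ha : 0 < a) (hb : b ≠ 0) :
    ∃ K : ENNReal, K ≠ ⊤ ∧ ∀ s : ℝ,
      ∑' m : ℕ, ENNReal.ofReal (Real.exp (-(a * |m * b + s|))) ≤ K := by
  have hb' : 0 < |b| := abs_pos.2 hb
  have hab : 0 < a * |b| := by positivity
  have hsum : Summable fun n : ℕ => Real.exp (-(a * |b|)) ^ n :=
    summable_geometric_of_lt_one (Real.exp_pos _).le (by rw [Real.exp_lt_one_iff]; linarith)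
  have hZ : Summable fun z : ℤ => Real.exp (a * |b| * (1 - |(z : ℝ)|)) := by
    apply Summable.of_nat_of_neg
    · refine (hsum.mul_left (Real.exp (a * |b|))).congr fun n => ?_
      rw [← Real.exp_nat_mul, ← Real.exp_add]
      congr 1
      push_cast
      rw [Nat.abs_cast]; ring
    · refine (hsum.mul_left (Real.exp (a * |b|))).congr fun n => ?_
      rw [← Real.exp_nat_mul, ← Real.exp_add]
      congr 1
      push_cast
      rw [abs_neg, Nat.abs_cast]; ring
  refine ⟨_, hZ.tsum_ofReal_ne_top, fun s => ?_⟩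
  let u : ℝ := -s / b
  have hinj : Function.Injective fun m : ℕ => (m : ℤ) - ⌊u⌋ := by
    intro x y h
    simpa using h
  refine le_trans (ENNReal.tsum_le_tsum fun m => ?_)
    (ENNReal.tsum_comp_le_tsum_of_injective hinj _)
  apply ENNReal.ofReal_le_ofReal
  apply Real.exp_le_exp.2
  have h1 : |m * b + s| = |b| * |(m : ℝ) - u| := by
    rw [← abs_mul]; congr 1; simp only [u]; field_simp; ring
  have h2 : |((((m : ℤ) - ⌊u⌋ : ℤ)) : ℝ)| ≤ |(m : ℝ) - u| + 1 := by
    push_cast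
    have := Int.floor_le u
    have := Int.lt_floor_add_one u
    have h3 : |u - ⌊u⌋| ≤ 1 := by rw [abs_le]; constructor <;> linarith
    calc |(m : ℝ) - ⌊u⌋| = |((m : ℝ) - u) + (u - ⌊u⌋)| := by ring_nf
      _ ≤ _ := abs_add_le _ _
      _ ≤ _ := by linarith
  rw [h1]
  nlinarith

lemma poissonPMF_nonneg {k : ℕ} (lam : Fin k → ℝ) (h : ∀ i, 0 ≤ lam i) (x : Fin k → ℕ) :
    0 ≤ poissonPMF lam x := by
  unfold poissonPMF
  refine Finset.prod_nonneg fun i _ => ?_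
  have := h i
  positivity

lemma pois_insert {k : ℕ} (lam : Fin (k + 1) → ℝ) (j : Fin (k + 1)) (m : ℕ) (y : Fin k → ℕ) :
    poissonPMF lam (Fin.insertNthEquiv (fun _ => ℕ) j (m, y)) =
      lam j ^ m * Real.exp (-lam j) / (Nat.factorial m) *
        poissonPMF (fun i => lam (j.succAbove i)) y := by
  unfold poissonPMF
  rw [Fin.prod_univ_succAbove _ j]
  simp

lemma pois_one (r : ℝ) (hr : 0 ≤ r) :
    ∑' m : ℕ, ENNReal.ofReal (r ^ m * Real.exp (-r) / (Nat.factorial m)) = 1 := by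
  have h : HasSum (fun n : ℕ => Real.exp (-r) * r ^ n / (Nat.factorial n)) 1 :=
    ProbabilityTheory.hasSum_one_poissonMeasure ⟨r, hr⟩
  have h' : HasSum (fun m : ℕ => r ^ m * Real.exp (-r) / (Nat.factorial m)) 1 := by
    convert h using 2 with m
    ring
  rw [← ENNReal.ofReal_tsum_of_nonneg _ h'.summable, h'.tsum_eq, ENNReal.ofReal_one]
  intro m
  positivity

lemma pois_total : ∀ {k : ℕ} (lam : Fin k → ℝ), (∀ i, 0 ≤ lam i) →
    ∑' x : Fin k → ℕ, ENNReal.ofReal (poissonPMF lam x) = 1 := by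
  intro k
  induction k with
  | zero => intro lam _; simp [poissonPMF]
  | succ k ih =>
    intro lam h
    rw [← (Fin.insertNthEquiv (fun _ => ℕ) (0 : Fin (k + 1))).tsum_eq]
    rw [ENNReal.tsum_prod' ]
    simp only [pois_insert]
    have : ∀ m : ℕ, ∑' y : Fin k → ℕ, ENNReal.ofReal
        (lam 0 ^ m * Real.exp (-lam 0) / (Nat.factorial m) *
          poissonPMF (fun i => lam ((0 : Fin (k + 1)).succAbove i)) y) =
        ENNReal.ofReal (lam 0 ^ m * Real.exp (-lam 0) / (Nat.factorial m)) := by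
      intro m
      have h0 := h 0
      simp_rw [ENNReal.ofReal_mul (show
        0 ≤ lam 0 ^ m * Real.exp (-lam 0) / (Nat.factorial m : ℝ) by positivity)]
      rw [ENNReal.tsum_mul_left, ih _ (fun i => h _), mul_one]
    simp_rw [this]
    exact pois_one _ (h 0)

lemma pois_anti {k : ℕ} (b : Fin (k + 1) → ℝ) (j : Fin (k + 1)) (hb : b j ≠ 0) (a : ℝ)
    (ha : 0 < a) :
    ∃ K : ENNReal, K ≠ ⊤ ∧ ∀ (lam : Fin (k + 1) → ℝ), (∀ i, 0 ≤ lam i) → 1 ≤ lam j → ∀ s : ℝ,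
      ∑' x : Fin (k + 1) → ℕ, ENNReal.ofReal (poissonPMF lam x *
        Real.exp (-(a * |(∑ i, x i * b i) + s|))) ≤ K * ENNReal.ofReal (1 / √(lam j)) := by
  obtain ⟨K, hK, hs⟩ := expsum a (b j) ha hb
  refine ⟨K, hK, fun lam hl hlj s => ?_⟩
  rw [← (Fin.insertNthEquiv (fun _ => ℕ) j).tsum_eq, ENNReal.tsum_prod', ENNReal.tsum_comm]
  simp only [pois_insert]
  have key : ∀ y : Fin k → ℕ, ∑' m : ℕ, ENNReal.ofReal
      (lam j ^ m * Real.exp (-lam j) / (Nat.factorial m) *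
          poissonPMF (fun i => lam (j.succAbove i)) y *
        Real.exp (-(a * |(∑ i, (Fin.insertNthEquiv (fun _ => ℕ) j (m, y) i : ℕ) * b i) + s|))) ≤
      ENNReal.ofReal (poissonPMF (fun i => lam (j.succAbove i)) y) *
        (ENNReal.ofReal (1 / √(lam j)) * K) := by
    intro y
    have hP := poissonPMF_nonneg (fun i => lam (j.succAbove i)) (fun i => hl _) y
    refine le_trans ?_ (mul_le_mul_right (mul_le_mul_right
      (hs ((∑ i, (y i : ℝ) * b (j.succAbove i)) + s)) _) _)
    rw [← ENNReal.tsum_mul_left, ← ENNReal.tsum_mul_left]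
    refine ENNReal.tsum_le_tsum fun m => ?_
    rw [← ENNReal.ofReal_mul (by positivity), ← ENNReal.ofReal_mul hP]
    apply ENNReal.ofReal_le_ofReal
    rw [Fin.sum_univ_succAbove _ j]
    simp only [Fin.insertNthEquiv_apply, Fin.insertNth_apply_same, Fin.insertNth_apply_succAbove]
    rw [add_assoc]
    have := pois_le (lam j) hlj m
    calc _ = poissonPMF (fun i => lam (j.succAbove i)) y *
          ((lam j ^ m * Real.exp (-lam j) / (Nat.factorial m)) * Real.exp (-(a *
          |m * b j + ((∑ i, (y i : ℝ) * b (j.succAbove i)) + s)|))) := by ring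
      _ ≤ _ := by gcongr
  refine le_trans (ENNReal.tsum_le_tsum key) ?_
  rw [ENNReal.tsum_mul_right, pois_total _ (fun i => hl _), one_mul, mul_comm]

lemma chdiv_attained {k : ℕ} (c₁ c₂ : Fin k → ℝ)
    (hc₁ : ∀ i, 0 < c₁ i) (hc₂ : ∀ i, 0 < c₂ i) (hne : c₁ ≠ c₂) :
    ∃ t : ℝ, 0 < t ∧ t < 1 ∧ CHdiv c₁ c₂ =
      ∑ i, (t * c₁ i + (1 - t) * c₂ i - c₁ i ^ t * c₂ i ^ (1 - t)) := by
  set f : ℝ → ℝ := fun t => ∑ i, (t * c₁ i + (1 - t) * c₂ i - c₁ i ^ t * c₂ i ^ (1 - t)) with hf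
  have hcont : Continuous f := by
    refine continuous_finsetSum _ fun i _ => ?_
    have h1 : Continuous fun t : ℝ => c₁ i ^ t :=
      Continuous.rpow continuous_const continuous_id (fun _ => Or.inl (hc₁ i).ne')
    have h2 : Continuous fun t : ℝ => c₂ i ^ (1 - t) :=
      Continuous.rpow continuous_const (by fun_prop) (fun _ => Or.inl (hc₂ i).ne')
    fun_prop
  obtain ⟨t, ht, hmax⟩ := isCompact_Icc.exists_isMaxOn (Set.nonempty_Icc.2 zero_le_one)
    (hcont.continuousOn (s := Set.Icc (0 : ℝ) 1))
  have hhalf : 0 < f (1 / 2) := by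
    have hterm : ∀ i, (1 / 2 : ℝ) * c₁ i + (1 - 1 / 2) * c₂ i - c₁ i ^ (1 / 2 : ℝ) *
        c₂ i ^ (1 - 1 / 2 : ℝ) = (√(c₁ i) - √(c₂ i)) ^ 2 / 2 := by
      intro i
      rw [show (1 - 1 / 2 : ℝ) = 1 / 2 by norm_num, ← Real.sqrt_eq_rpow, ← Real.sqrt_eq_rpow]
      have := Real.sq_sqrt (hc₁ i).le
      have := Real.sq_sqrt (hc₂ i).le
      nlinarith
    simp only [hf]
    simp_rw [hterm]
    obtain ⟨j, hj⟩ := Function.ne_iff.1 hne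
    refine Finset.sum_pos' (fun i _ => by positivity) ⟨j, Finset.mem_univ _, ?_⟩
    have : √(c₁ j) - √(c₂ j) ≠ 0 := by
      intro h
      exact hj ((Real.sqrt_inj (hc₁ j).le (hc₂ j).le).1 (sub_eq_zero.1 h))
    positivity
  have hft : 0 < f t := lt_of_lt_of_le hhalf (hmax ⟨by norm_num, by norm_num⟩)
  have ht0 : t ≠ 0 := by
    rintro rfl
    simp [hf] at hft
  have ht1 : t ≠ 1 := by
    rintro rfl
    simp [hf] at hft
  refine ⟨t, lt_of_le_of_ne ht.1 ht0.symm, lt_of_le_of_ne ht.2 ht1, ?_⟩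
  have hg : IsGreatest (f '' Set.Icc (0 : ℝ) 1) (f t) := by
    refine ⟨⟨t, ht, rfl⟩, ?_⟩
    rintro _ ⟨u, hu, rfl⟩
    exact hmax hu
  exact hg.csSup_eq

lemma pois_tilt {k : ℕ} (c₁ c₂ : Fin k → ℝ) (hc₁ : ∀ i, 0 < c₁ i) (hc₂ : ∀ i, 0 < c₂ i)
    (t L : ℝ) (x : Fin k → ℕ) :
    poissonPMF (fun i => c₁ i * L) x =
      Real.exp (-(L * ∑ i, (t * c₁ i + (1 - t) * c₂ i - c₁ i ^ t * c₂ i ^ (1 - t)))) *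
      poissonPMF (fun i => (c₁ i ^ t * c₂ i ^ (1 - t)) * L) x *
      Real.exp ((1 - t) * ((∑ i, x i * (Real.log (c₁ i) - Real.log (c₂ i))) +
        -(L * ∑ i, (c₁ i - c₂ i)))) := by
  unfold poissonPMF
  rw [Finset.mul_sum, Finset.mul_sum, ← Finset.sum_neg_distrib, ← Finset.sum_neg_distrib,
    ← Finset.sum_add_distrib, Finset.mul_sum, Real.exp_sum, Real.exp_sum,
    ← Finset.prod_mul_distrib, ← Finset.prod_mul_distrib]
  refine Finset.prod_congr rfl fun i _ => ?_
  have h1 := hc₁ i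
  have h2 := hc₂ i
  have e1 : c₁ i ^ x i = Real.exp (x i * Real.log (c₁ i)) := by
    rw [Real.exp_nat_mul, Real.exp_log h1]
  have e2 : (c₁ i ^ t * c₂ i ^ (1 - t)) ^ x i =
      Real.exp (x i * (Real.log (c₁ i) * t + Real.log (c₂ i) * (1 - t))) := by
    rw [Real.exp_nat_mul, Real.exp_add, Real.rpow_def_of_pos h1, Real.rpow_def_of_pos h2]
  dsimp only
  rw [mul_pow, mul_pow, e1, e2]
  generalize c₁ i ^ t * c₂ i ^ (1 - t) = d
  have : Real.exp (x i * Real.log (c₁ i)) * Real.exp (-(c₁ i * L)) =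
      Real.exp (-(L * (t * c₁ i + (1 - t) * c₂ i - d))) *
      (Real.exp (x i * (Real.log (c₁ i) * t + Real.log (c₂ i) * (1 - t))) *
        Real.exp (-(d * L))) *
      Real.exp ((1 - t) * (x i * (Real.log (c₁ i) - Real.log (c₂ i)) + -(L * (c₁ i - c₂ i)))) := by
    rw [← Real.exp_add, ← Real.exp_add, ← Real.exp_add, ← Real.exp_add]
    congr 1
    ring
  linear_combination (L ^ x i / (Nat.factorial (x i) : ℝ)) * this

theorem statement_0 (k : ℕ) (hk : 1 ≤ k) (c₁ c₂ : Fin k → ℝ)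
    (hc₁ : ∀ i, 0 < c₁ i) (hc₂ : ∀ i, 0 < c₂ i) (hne : c₁ ≠ c₂)
    (p₁ p₂ : ℝ) (hp₁ : 0 < p₁) (hp₂ : 0 < p₂) :
    ∃ C : ℝ, 0 < C ∧ ∃ n₀ : ℕ, ∀ n : ℕ, n₀ ≤ n →
      (∑' x : Fin k → ℕ,
          min (p₁ * poissonPMF (fun i => c₁ i * Real.log n) x)
              (p₂ * poissonPMF (fun i => c₂ i * Real.log n) x))
        ≤ C * (n : ℝ) ^ (-CHdiv c₁ c₂) * Real.log n ^ (-(1 / 2) : ℝ) := by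
  obtain ⟨t, ht0, ht1, hD⟩ := chdiv_attained c₁ c₂ hc₁ hc₂ hne
  obtain ⟨j, hj⟩ := Function.ne_iff.1 hne
  obtain ⟨k, rfl⟩ := Nat.exists_eq_add_of_le' hk
  have hb : Real.log (c₁ j) - Real.log (c₂ j) ≠ 0 := by
    intro h
    exact hj (Real.log_injOn_pos (hc₁ j) (hc₂ j) (sub_eq_zero.1 h))
  set a := min t (1 - t) with ha
  have ha0 : 0 < a := lt_min ht0 (by linarith)
  obtain ⟨K, hK, hmain⟩ := pois_anti (fun i => Real.log (c₁ i) - Real.log (c₂ i)) j hb a ha0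
  set d : Fin (k + 1) → ℝ := fun i => c₁ i ^ t * c₂ i ^ (1 - t) with hd
  have hdpos : ∀ i, 0 < d i := fun i =>
    mul_pos (Real.rpow_pos_of_pos (hc₁ i) _) (Real.rpow_pos_of_pos (hc₂ i) _)
  set p := max p₁ p₂ with hp
  have hp0 : 0 < p := lt_max_of_lt_left hp₁
  have hsd : 0 < √(d j) := Real.sqrt_pos.2 (hdpos j)
  have hKn : 0 ≤ K.toReal := ENNReal.toReal_nonneg
  refine ⟨p * (K.toReal + 1) * (1 / √(d j)), by positivity, ⌈Real.exp (1 / d j)⌉₊, fun n hn => ?_⟩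
  have hn' : Real.exp (1 / d j) ≤ n := Nat.ceil_le.1 hn
  have hn0 : (0 : ℝ) < n := lt_of_lt_of_le (Real.exp_pos _) hn'
  have hL : 1 / d j ≤ Real.log n := (Real.le_log_iff_exp_le hn0).2 hn'
  set L := Real.log n with hLdef
  have hL0 : 0 < L := lt_of_lt_of_le (by have := hdpos j; positivity) hL
  have hdL : 1 ≤ d j * L := by
    rw [div_le_iff₀ (hdpos j)] at hL
    linarith
  have hlam : ∀ i, 0 ≤ d i * L := fun i => (mul_pos (hdpos i) hL0).le
  have hm := hmain (fun i => d i * L) hlam hdL (-(L * ∑ i, (c₁ i - c₂ i)))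
  set E := (n : ℝ) ^ (-CHdiv c₁ c₂) with hE
  have hE' : E = Real.exp (-(L * ∑ i, (t * c₁ i + (1 - t) * c₂ i - c₁ i ^ t * c₂ i ^ (1 - t)))) := by
    rw [hE, Real.rpow_def_of_pos hn0, hD, mul_neg]
  have hE0 : 0 < E := Real.rpow_pos_of_pos hn0 _
  set R : (Fin (k + 1) → ℕ) → ℝ := fun x =>
    (∑ i, x i * (Real.log (c₁ i) - Real.log (c₂ i))) + -(L * ∑ i, (c₁ i - c₂ i)) with hR
  have hpt : ∀ x : Fin (k + 1) → ℕ, min (p₁ * poissonPMF (fun i => c₁ i * L) x)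
      (p₂ * poissonPMF (fun i => c₂ i * L) x) ≤
      (p * E) * (poissonPMF (fun i => d i * L) x * Real.exp (-(a * |R x|))) := by
    intro x
    have h1 := pois_tilt c₁ c₂ hc₁ hc₂ t L x
    have h2 := pois_tilt c₂ c₁ hc₂ hc₁ (1 - t) L x
    rw [← hE'] at h1
    have hsw : ∀ i, c₂ i ^ (1 - t) * c₁ i ^ (1 - (1 - t)) = d i := by
      intro i; rw [sub_sub_cancel, mul_comm]
    have hE2 : E = Real.exp (-(L * ∑ i, ((1 - t) * c₂ i + (1 - (1 - t)) * c₁ i -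
        c₂ i ^ (1 - t) * c₁ i ^ (1 - (1 - t))))) := by
      rw [hE']
      congr 3
      refine Finset.sum_congr rfl fun i _ => ?_
      rw [hsw, hd]; ring
    rw [← hE2] at h2
    simp only [hsw] at h2
    have hR2 : (1 - (1 - t)) * ((∑ i, x i * (Real.log (c₂ i) - Real.log (c₁ i))) +
        -(L * ∑ i, (c₂ i - c₁ i))) = - (t * R x) := by
      have e1 : ∑ i, x i * (Real.log (c₂ i) - Real.log (c₁ i)) =
          -∑ i, x i * (Real.log (c₁ i) - Real.log (c₂ i)) := by
        rw [← Finset.sum_neg_distrib]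
        exact Finset.sum_congr rfl fun i _ => by ring
      have e2 : ∑ i, (c₂ i - c₁ i) = -∑ i, (c₁ i - c₂ i) := by
        rw [← Finset.sum_neg_distrib]
        exact Finset.sum_congr rfl fun i _ => by ring
      rw [hR, e1, e2]; ring
    rw [hR2] at h2
    have hQ := poissonPMF_nonneg (fun i => d i * L) hlam x
    rcases le_total 0 (R x) with h | h
    · refine (min_le_right _ _).trans ?_
      rw [h2, abs_of_nonneg h]
      have : Real.exp (-(t * R x)) ≤ Real.exp (-(a * R x)) := by
        apply Real.exp_le_exp.2
        have : a ≤ t := min_le_left _ _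
        nlinarith
      have hpp : p₂ ≤ p := le_max_right _ _
      calc _ = (p₂ * E) * (poissonPMF (fun i => d i * L) x * Real.exp (-(t * R x))) := by ring
        _ ≤ _ := by gcongr
    · refine (min_le_left _ _).trans ?_
      rw [h1, abs_of_nonpos h]
      have : Real.exp ((1 - t) * R x) ≤ Real.exp (-(a * -R x)) := by
        apply Real.exp_le_exp.2
        have : a ≤ 1 - t := min_le_right _ _
        nlinarith
      have hpp : p₁ ≤ p := le_max_left _ _
      calc _ = (p₁ * E) * (poissonPMF (fun i => d i * L) x * Real.exp ((1 - t) * R x)) := by ring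
        _ ≤ _ := by gcongr
  have hnn : ∀ x : Fin (k + 1) → ℕ, 0 ≤ min (p₁ * poissonPMF (fun i => c₁ i * L) x)
      (p₂ * poissonPMF (fun i => c₂ i * L) x) := fun x => le_min
    (mul_nonneg hp₁.le (poissonPMF_nonneg _ (fun i => (mul_pos (hc₁ i) hL0).le) x))
    (mul_nonneg hp₂.le (poissonPMF_nonneg _ (fun i => (mul_pos (hc₂ i) hL0).le) x))
  have htot : ∑' x : Fin (k + 1) → ℕ, ENNReal.ofReal
      (min (p₁ * poissonPMF (fun i => c₁ i * L) x) (p₂ * poissonPMF (fun i => c₂ i * L) x)) ≤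
      ENNReal.ofReal (p * E) * (K * ENNReal.ofReal (1 / √(d j * L))) := by
    refine le_trans (ENNReal.tsum_le_tsum fun x => ENNReal.ofReal_le_ofReal (hpt x)) ?_
    simp_rw [ENNReal.ofReal_mul (show 0 ≤ p * E by positivity)]
    rw [ENNReal.tsum_mul_left]
    exact mul_le_mul_right hm _
  have hfin : ENNReal.ofReal (p * E) * (K * ENNReal.ofReal (1 / √(d j * L))) ≠ ⊤ :=
    ENNReal.mul_ne_top ENNReal.ofReal_ne_top (ENNReal.mul_ne_top hK ENNReal.ofReal_ne_top)
  have hre := ENNReal.toReal_mono hfin htot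
  rw [ENNReal.tsum_toReal_eq (fun _ => ENNReal.ofReal_ne_top)] at hre
  simp_rw [ENNReal.toReal_ofReal (hnn _)] at hre
  refine hre.trans ?_
  rw [ENNReal.toReal_mul, ENNReal.toReal_mul, ENNReal.toReal_ofReal (by positivity),
    ENNReal.toReal_ofReal (by positivity), Real.rpow_neg hL0.le, ← Real.sqrt_eq_rpow,
    Real.sqrt_mul (hdpos j).le]
  have hsL : 0 < √L := Real.sqrt_pos.2 hL0
  calc _ = p * K.toReal * (1 / √(d j)) * E * (√L)⁻¹ := by field_simp
    _ ≤ _ := by gcongr; linarith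
end

section
/- Let k ≥ 1, let c₁, c₂ ∈ ℝ^k have all entries positive with c₁ ≠ c₂, and let p₁, p₂ > 0. Then there exist a constant c > 0 and n₀ ∈ ℕ such that for every integer n ≥ n₀, ∑_{x ∈ ℕ^k} min(p₁ · P_{c₁ ln n}(x), p₂ · P_{c₂ ln n}(x)) ≥ c · n^{−D₊(c₁,c₂)} · (ln n)^{−k/2}. -/
open scoped BigOperators

lemma aux_fact (n : ℕ) (hn : 1 ≤ n) :
    (n.factorial : ℝ) ≤ Real.exp 1 * Real.sqrt n * ((n:ℝ) ^ n * Real.exp (-(n:ℝ))) := by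
  obtain ⟨m, rfl⟩ : ∃ m, n = m + 1 := ⟨n - 1, by omega⟩
  have h := Stirling.stirlingSeq'_antitone (Nat.zero_le m)
  simp only [Function.comp, Nat.succ_eq_add_one, zero_add, Stirling.stirlingSeq_one] at h
  unfold Stirling.stirlingSeq at h
  have hpos : (0:ℝ) < ((m+1:ℕ):ℝ) := by positivity
  rw [div_le_iff₀ (by positivity)] at h
  refine h.trans (le_of_eq ?_)
  rw [Real.sqrt_mul (by norm_num), div_pow, ← Real.exp_nat_mul, mul_one, Real.exp_neg]
  have : Real.sqrt 2 ≠ 0 := by positivity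
  field_simp

lemma aux_coord (m z : ℝ) (hm : 0 < m) (hz : 0 < z) :
    ∃ c : ℝ, 0 < c ∧ ∀ L : ℝ, 1 ≤ z * L →
      c * Real.exp (L * (z * Real.log (m / z) + z - m)) * L ^ (-(1:ℝ) / 2) ≤
        (m * L) ^ (⌊z * L⌋₊) * Real.exp (-(m * L)) / (Nat.factorial ⌊z * L⌋₊) := by
  refine ⟨Real.exp (-|Real.log (m / z)|) * Real.exp (-2) * (Real.sqrt z)⁻¹, by positivity, ?_⟩
  intro L hL
  have hLp : 0 < L := by
    by_contra h
    push Not at h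
    nlinarith [mul_nonneg hz.le (neg_nonneg.2 h)]
  set x := ⌊z * L⌋₊ with hx
  have hx1 : 1 ≤ x := Nat.le_floor (by simpa using hL)
  have hxle : (x:ℝ) ≤ z * L := Nat.floor_le (by positivity)
  have hxgt : z * L < x + 1 := Nat.lt_floor_add_one _
  have hxpos : (0:ℝ) < x := by exact_mod_cast hx1
  have hfac := aux_fact x hx1
  have hfp : (0:ℝ) < x.factorial := by positivity
  rw [le_div_iff₀ hfp]
  have e1 : (m * L) ^ x = (z * L) ^ x * Real.exp (x * Real.log (m / z)) := by
    rw [Real.exp_nat_mul, Real.exp_log (by positivity), ← mul_pow]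
    congr 1
    field_simp
  have e2 : L ^ (-(1:ℝ) / 2) = (Real.sqrt L)⁻¹ := by
    rw [Real.sqrt_eq_rpow, ← Real.rpow_neg hLp.le]; norm_num
  have h3 : z * L * Real.log (m/z) - |Real.log (m/z)| ≤ x * Real.log (m / z) := by
    have h1 : |(z * L - x) * Real.log (m/z)| ≤ 1 * |Real.log (m/z)| := by
      rw [abs_mul]
      gcongr
      rw [abs_le]; constructor <;> linarith
    have := (abs_le.1 h1).2
    linarith
  have hs : Real.sqrt x ≤ Real.sqrt z * Real.sqrt L := by
    rw [← Real.sqrt_mul hz.le]; exact Real.sqrt_le_sqrt hxle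
  have hpw : (x:ℝ)^x ≤ (z*L)^x := by gcongr
  rw [e1, e2]
  have hsz : 0 < Real.sqrt z := by positivity
  have hsL : 0 < Real.sqrt L := by positivity
  calc _ ≤ Real.exp (-|Real.log (m / z)|) * Real.exp (-2) * (Real.sqrt z)⁻¹ * Real.exp (L * (z * Real.log (m / z) + z - m)) * (Real.sqrt L)⁻¹ * (Real.exp 1 * (Real.sqrt z * Real.sqrt L) * ((z*L) ^ x * Real.exp (-(x:ℝ)))) := by
        gcongr
        exact hfac.trans (by gcongr)
    _ = (z*L)^x * Real.exp (-|Real.log (m / z)| + -2 + L * (z * Real.log (m / z) + z - m) + 1 + -(x:ℝ)) := by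
        simp only [Real.exp_add]
        field_simp
    _ ≤ (z*L)^x * Real.exp (x * Real.log (m / z) + -(m * L)) := by
        refine mul_le_mul_of_nonneg_left (Real.exp_le_exp.2 ?_) (by positivity)
        nlinarith
    _ = _ := by rw [Real.exp_add]; ring

lemma aux_summable {k : ℕ} (lam : Fin k → ℝ) (h : ∀ i, 0 ≤ lam i) :
    Summable (poissonPMF lam) := by
  have hs : ∀ i, Summable (fun j : ℕ => lam i ^ j * Real.exp (-lam i) / (Nat.factorial j)) := by
    intro i
    refine ((Real.summable_pow_div_factorial (lam i)).mul_right (Real.exp (-lam i))).congr ?_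
    intro j; ring
  have hn : ∀ i (j : ℕ), 0 ≤ lam i ^ j * Real.exp (-lam i) / (Nat.factorial j) := by
    intro i j
    have := h i
    positivity
  refine summable_of_sum_le
    (c := ∏ i, ∑' j : ℕ, lam i ^ j * Real.exp (-lam i) / (Nat.factorial j)) ?_ ?_
  · intro x; exact Finset.prod_nonneg fun i _ => hn i _
  · intro u
    calc ∑ x ∈ u, poissonPMF lam x
        ≤ ∑ x ∈ Fintype.piFinset (fun i => u.image (fun x => x i)), poissonPMF lam x := by
          apply Finset.sum_le_sum_of_subset_of_nonneg
          · intro x hx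
            rw [Fintype.mem_piFinset]
            intro i
            exact Finset.mem_image_of_mem _ hx
          · intro x _ _
            exact Finset.prod_nonneg fun i _ => hn i _
      _ = ∏ i, ∑ j ∈ u.image (fun x => x i), lam i ^ j * Real.exp (-lam i) / (Nat.factorial j) := by
          rw [Finset.prod_univ_sum]; rfl
      _ ≤ _ := by
          apply Finset.prod_le_prod
          · intro i _; exact Finset.sum_nonneg fun j _ => hn i j
          · intro i _; exact (hs i).sum_le_tsum _ fun j _ => hn i j

lemma aux_multi {k : ℕ} (m z : Fin k → ℝ) (hm : ∀ i, 0 < m i) (hz : ∀ i, 0 < z i) :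
    ∃ c : ℝ, 0 < c ∧ ∀ L : ℝ, 0 < L → (∀ i, 1 ≤ z i * L) →
      c * Real.exp (L * ∑ i, (z i * Real.log (m i / z i) + z i - m i)) * L ^ (-(k:ℝ) / 2) ≤
        poissonPMF (fun i => m i * L) (fun i => ⌊z i * L⌋₊) := by
  choose c hc h using fun i => aux_coord (m i) (z i) (hm i) (hz i)
  refine ⟨∏ i, c i, Finset.prod_pos fun i _ => hc i, ?_⟩
  intro L hL hzL
  unfold poissonPMF
  refine le_trans (le_of_eq ?_) (Finset.prod_le_prod ?_ fun i _ => h i L (hzL i))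
  · rw [Finset.prod_mul_distrib, Finset.prod_mul_distrib, Finset.mul_sum, Real.exp_sum]
    congr 1
    rw [Finset.prod_const, Finset.card_univ, Fintype.card_fin, ← Real.rpow_mul_natCast hL.le]
    congr 1
    ring
  · intro i _
    have := hc i
    positivity

lemma aux_crit {k : ℕ} (c₁ c₂ : Fin k → ℝ)
    (hc₁ : ∀ i, 0 < c₁ i) (hc₂ : ∀ i, 0 < c₂ i) :
    ∃ t ∈ Set.Icc (0:ℝ) 1, ∑ i, (c₁ i - c₂ i) =
      ∑ i, c₁ i ^ t * c₂ i ^ (1 - t) * (Real.log (c₁ i) - Real.log (c₂ i)) := by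
  have hd : ∀ t : ℝ, HasDerivAt (fun t : ℝ => ∑ i, (t * c₁ i + (1 - t) * c₂ i - c₁ i ^ t * c₂ i ^ (1 - t)))
      (∑ i, ((c₁ i - c₂ i) - c₁ i ^ t * c₂ i ^ (1 - t) * (Real.log (c₁ i) - Real.log (c₂ i)))) t := by
    intro t
    apply HasDerivAt.fun_sum
    intro i _
    have h0 : HasDerivAt (fun t : ℝ => 1 - t) (-1) t := (hasDerivAt_id t).const_sub 1
    have h1 : HasDerivAt (fun t : ℝ => c₁ i ^ t) _ t := (hasDerivAt_id t).const_rpow (hc₁ i)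
    have h2 : HasDerivAt (fun t : ℝ => c₂ i ^ (1 - t)) _ t := h0.const_rpow (hc₂ i)
    have h3 := (((hasDerivAt_id t).mul_const (c₁ i)).add (h0.mul_const (c₂ i))).sub (h1.mul h2)
    refine h3.congr_deriv ?_
    ring
  obtain ⟨t, ht, h⟩ := exists_hasDerivAt_eq_zero (zero_lt_one' ℝ)
    (fun x _ => (hd x).continuousAt.continuousWithinAt) (by simp) (fun x _ => hd x)
  refine ⟨t, Set.Ioo_subset_Icc_self ht, ?_⟩
  rw [Finset.sum_sub_distrib] at h
  linarith

theorem statement_1 (k : ℕ) (hk : 1 ≤ k) (c₁ c₂ : Fin k → ℝ)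
    (hc₁ : ∀ i, 0 < c₁ i) (hc₂ : ∀ i, 0 < c₂ i) (hne : c₁ ≠ c₂)
    (p₁ p₂ : ℝ) (hp₁ : 0 < p₁) (hp₂ : 0 < p₂) :
    ∃ c : ℝ, 0 < c ∧ ∃ n₀ : ℕ, ∀ n : ℕ, n₀ ≤ n →
      c * (n : ℝ) ^ (-CHdiv c₁ c₂) * Real.log n ^ (-(k : ℝ) / 2)
        ≤ ∑' x : Fin k → ℕ,
            min (p₁ * poissonPMF (fun i => c₁ i * Real.log n) x)
                (p₂ * poissonPMF (fun i => c₂ i * Real.log n) x) := by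
  obtain ⟨t, ht, hcrit⟩ := aux_crit c₁ c₂ hc₁ hc₂
  set z : Fin k → ℝ := fun i => c₁ i ^ t * c₂ i ^ (1 - t) with hzdef
  have hz : ∀ i, 0 < z i := fun i =>
    mul_pos (Real.rpow_pos_of_pos (hc₁ i) _) (Real.rpow_pos_of_pos (hc₂ i) _)
  have hlogz : ∀ i, Real.log (z i) = t * Real.log (c₁ i) + (1 - t) * Real.log (c₂ i) := by
    intro i
    rw [hzdef]
    simp only
    rw [Real.log_mul (Real.rpow_pos_of_pos (hc₁ i) _).ne' (Real.rpow_pos_of_pos (hc₂ i) _).ne',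
      Real.log_rpow (hc₁ i), Real.log_rpow (hc₂ i)]
  set F : ℝ := ∑ i, (t * c₁ i + (1 - t) * c₂ i - c₁ i ^ t * c₂ i ^ (1 - t)) with hF
  have hcrit' : ∑ i, ((c₁ i - c₂ i) - z i * (Real.log (c₁ i) - Real.log (c₂ i))) = 0 := by
    rw [Finset.sum_sub_distrib, hcrit, sub_self]
  have hFle : F ≤ CHdiv c₁ c₂ := by
    apply le_csSup
    · apply IsCompact.bddAbove
      apply isCompact_Icc.image
      have h1 : ∀ i, Continuous fun t : ℝ => c₁ i ^ t := fun i =>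
        Real.continuous_const_rpow (hc₁ i).ne'
      have h2 : ∀ i, Continuous fun t : ℝ => c₂ i ^ (1 - t) := fun i =>
        (Real.continuous_const_rpow (hc₂ i).ne').comp (by fun_prop)
      fun_prop
    · exact ⟨t, ht, rfl⟩
  have hS1 : ∑ i, (z i * Real.log (c₁ i / z i) + z i - c₁ i) = -F := by
    have : ∑ i, (z i * Real.log (c₁ i / z i) + z i - c₁ i) + F =
        -(1 - t) * ∑ i, ((c₁ i - c₂ i) - z i * (Real.log (c₁ i) - Real.log (c₂ i))) := by
      rw [hF, ← Finset.sum_add_distrib, Finset.mul_sum]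
      refine Finset.sum_congr rfl fun i _ => ?_
      rw [Real.log_div (hc₁ i).ne' (hz i).ne', hlogz]
      simp only [hzdef]
      ring
    rw [hcrit'] at this
    linarith
  have hS2 : ∑ i, (z i * Real.log (c₂ i / z i) + z i - c₂ i) = -F := by
    have : ∑ i, (z i * Real.log (c₂ i / z i) + z i - c₂ i) + F =
        t * ∑ i, ((c₁ i - c₂ i) - z i * (Real.log (c₁ i) - Real.log (c₂ i))) := by
      rw [hF, ← Finset.sum_add_distrib, Finset.mul_sum]
      refine Finset.sum_congr rfl fun i _ => ?_
      rw [Real.log_div (hc₂ i).ne' (hz i).ne', hlogz]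
      simp only [hzdef]
      ring
    rw [hcrit'] at this
    linarith
  obtain ⟨a, ha, hA⟩ := aux_multi c₁ z hc₁ hz
  obtain ⟨b, hb, hB⟩ := aux_multi c₂ z hc₂ hz
  rw [hS1] at hA
  rw [hS2] at hB
  have hlog : Filter.Tendsto (fun n : ℕ => Real.log (n:ℝ)) Filter.atTop Filter.atTop :=
    Real.tendsto_log_atTop.comp tendsto_natCast_atTop_atTop
  have hev : ∀ᶠ n : ℕ in Filter.atTop, 1 ≤ n ∧ 0 < Real.log (n:ℝ) ∧ ∀ i, 1 ≤ z i * Real.log (n:ℝ) := by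
    refine (Filter.eventually_ge_atTop 1).and ((hlog.eventually_gt_atTop 0).and ?_)
    rw [Filter.eventually_all]
    intro i
    exact (hlog.const_mul_atTop (hz i)).eventually_ge_atTop 1
  obtain ⟨n₀, hn₀⟩ := Filter.eventually_atTop.1 hev
  refine ⟨min (p₁ * a) (p₂ * b), by positivity, n₀, ?_⟩
  intro n hn
  obtain ⟨hn1, hL, hzL⟩ := hn₀ n hn
  have hnn : (1:ℝ) ≤ n := by exact_mod_cast hn1
  set L := Real.log (n:ℝ) with hLdef
  have hA' := hA L hL hzL
  have hB' := hB L hL hzL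
  have hexp : (n:ℝ) ^ (-CHdiv c₁ c₂) ≤ Real.exp (L * -F) := by
    rw [Real.rpow_def_of_pos (by linarith)]
    apply Real.exp_le_exp.2
    nlinarith
  have hLk : 0 < L ^ (-(k:ℝ)/2) := by positivity
  have hnonneg : ∀ (m : Fin k → ℝ), (∀ i, 0 < m i) → ∀ x, 0 ≤ poissonPMF (fun i => m i * L) x := by
    intro m hm x
    refine Finset.prod_nonneg fun i _ => ?_
    have := hm i
    positivity
  have hmn : ∀ x : Fin k → ℕ, 0 ≤ min (p₁ * poissonPMF (fun i => c₁ i * L) x)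
                (p₂ * poissonPMF (fun i => c₂ i * L) x) := fun x =>
    le_min (mul_nonneg hp₁.le (hnonneg _ hc₁ x)) (mul_nonneg hp₂.le (hnonneg _ hc₂ x))
  have hsum : Summable fun x : Fin k → ℕ => min (p₁ * poissonPMF (fun i => c₁ i * L) x)
                (p₂ * poissonPMF (fun i => c₂ i * L) x) :=
    Summable.of_nonneg_of_le hmn (fun x => min_le_left _ _)
      ((aux_summable (fun i => c₁ i * L) (fun i => (mul_pos (hc₁ i) hL).le)).mul_left p₁)
  refine le_trans ?_ (hsum.le_tsum (fun i => ⌊z i * L⌋₊) fun x _ => hmn x)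
  refine le_min ?_ ?_
  · calc _ ≤ (p₁ * a) * Real.exp (L * -F) * L ^ (-(k:ℝ)/2) := by
          gcongr
          exact min_le_left _ _
      _ = p₁ * (a * Real.exp (L * -F) * L ^ (-(k:ℝ)/2)) := by ring
      _ ≤ _ := by gcongr
  · calc _ ≤ (p₂ * b) * Real.exp (L * -F) * L ^ (-(k:ℝ)/2) := by
          gcongr
          exact min_le_right _ _
      _ = p₂ * (b * Real.exp (L * -F) * L ^ (-(k:ℝ)/2)) := by ring
      _ ≤ _ := by gcongr
end

section
/- Let k ≥ 1, let μ, ν ∈ ℝ^k have all entries positive, and let p₁, p₂ > 0. Then for every t ∈ [0,1], ∑_{x ∈ ℕ^k} min(p₁ P_μ(x), p₂ P_ν(x)) ≤ p₁^t p₂^{1−t} · exp(−∑_{i=1}^k (t μ_i + (1−t) ν_i − μ_i^t ν_i^{1−t})). Consequently, ∑_{x ∈ ℕ^k} min(p₁ P_μ(x), p₂ P_ν(x)) ≤ max(p₁, p₂) · exp(−D₊(μ, ν)). -/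
open scoped BigOperators

lemma aux_min {a b t : ℝ} (ha : 0 < a) (hb : 0 < b) (h0 : 0 ≤ t) (h1 : t ≤ 1) :
    min a b ≤ a ^ t * b ^ (1 - t) := by
  have hm : 0 < min a b := lt_min ha hb
  calc min a b = (min a b) ^ t * (min a b) ^ (1 - t) := by
        rw [← Real.rpow_add hm]; simp
    _ ≤ a ^ t * b ^ (1 - t) := by
        have h2 : 0 ≤ 1 - t := by linarith
        gcongr
        · exact min_le_left _ _
        · exact min_le_right _ _

lemma aux_max {a b t : ℝ} (ha : 0 < a) (hb : 0 < b) (h0 : 0 ≤ t) (h1 : t ≤ 1) :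
    a ^ t * b ^ (1 - t) ≤ max a b := by
  have hm : 0 < max a b := lt_max_of_lt_left ha
  calc a ^ t * b ^ (1 - t) ≤ (max a b) ^ t * (max a b) ^ (1 - t) := by
        have h2 : 0 ≤ 1 - t := by linarith
        gcongr
        · exact le_max_left _ _
        · exact le_max_right _ _
    _ = max a b := by
        rw [← Real.rpow_add hm]; simp

lemma aux_pos {k : ℕ} (μ : Fin k → ℝ) (hμ : ∀ i, 0 < μ i) (x : Fin k → ℕ) :
    0 < poissonPMF μ x := by
  unfold poissonPMF
  refine Finset.prod_pos fun i _ => ?_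
  have := hμ i
  positivity

lemma aux_one {a b t : ℝ} (ha : 0 < a) (hb : 0 < b) (n : ℕ) :
    (a ^ n * Real.exp (-a) / (Nat.factorial n)) ^ t *
      (b ^ n * Real.exp (-b) / (Nat.factorial n)) ^ (1 - t) =
    Real.exp (-(t * a + (1 - t) * b)) * ((a ^ t * b ^ (1 - t)) ^ n / (Nat.factorial n)) := by
  have hf : (0 : ℝ) < Nat.factorial n := by positivity
  rw [Real.div_rpow (by positivity) hf.le, Real.div_rpow (by positivity) hf.le,
    Real.mul_rpow (by positivity) (by positivity), Real.mul_rpow (by positivity) (by positivity),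
    ← Real.exp_mul, ← Real.exp_mul, mul_pow]
  have e1 : ∀ (c s : ℝ), 0 < c → (c ^ n) ^ s = (c ^ s) ^ n := by
    intro c s hc
    rw [← Real.rpow_natCast, ← Real.rpow_natCast, ← Real.rpow_mul hc.le, ← Real.rpow_mul hc.le,
      mul_comm]
  rw [e1 a t ha, e1 b _ hb]
  have e2 : (Nat.factorial n : ℝ) ^ t * (Nat.factorial n : ℝ) ^ (1 - t) = Nat.factorial n := by
    rw [← Real.rpow_add hf]; simp
  have e3 : Real.exp (-(t * a + (1 - t) * b)) = Real.exp (-a * t) * Real.exp (-b * (1 - t)) := by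
    rw [← Real.exp_add]; congr 1; ring
  rw [div_mul_div_comm, e2, e3]
  ring

lemma aux_sum {k : ℕ} (c l : Fin k → ℝ) (hl : ∀ i, 0 < l i) (s : Finset (Fin k → ℕ)) :
    ∑ x ∈ s, ∏ i, (Real.exp (-c i) * (l i ^ x i / (Nat.factorial (x i)))) ≤
      Real.exp (-∑ i, (c i - l i)) := by
  have hsub : s ⊆ Fintype.piFinset (fun i => s.image (fun x => x i)) := by
    intro x hx
    rw [Fintype.mem_piFinset]
    intro i
    exact Finset.mem_image_of_mem _ hx
  have hn : ∀ i (n : ℕ), 0 ≤ Real.exp (-c i) * (l i ^ n / (Nat.factorial n)) := by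
    intro i n
    have := hl i
    positivity
  refine (Finset.sum_le_sum_of_subset_of_nonneg hsub
    (fun x _ _ => Finset.prod_nonneg fun i _ => hn i _)).trans ?_
  rw [← Finset.prod_univ_sum (fun i => s.image (fun x => x i))
    (fun i n => Real.exp (-c i) * (l i ^ n / (Nat.factorial n))),
    ← Finset.sum_neg_distrib, Real.exp_sum]
  refine Finset.prod_le_prod (fun i _ => Finset.sum_nonneg fun n _ => hn i n) fun i _ => ?_
  rw [← Finset.mul_sum, neg_sub, sub_eq_neg_add, Real.exp_add]
  refine mul_le_mul_of_nonneg_left ?_ (Real.exp_pos _).le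
  have h := NormedSpace.expSeries_div_hasSum_exp (l i)
  rw [← Real.exp_eq_exp_ℝ] at h
  refine sum_le_hasSum _ (fun n _ => ?_) h
  have := hl i
  positivity

theorem statement_3 (k : ℕ) (hk : 1 ≤ k) (μ ν : Fin k → ℝ)
    (hμ : ∀ i, 0 < μ i) (hν : ∀ i, 0 < ν i)
    (p₁ p₂ : ℝ) (hp₁ : 0 < p₁) (hp₂ : 0 < p₂) :
    (∀ t ∈ Set.Icc (0 : ℝ) 1,
      ∑' x : Fin k → ℕ, min (p₁ * poissonPMF μ x) (p₂ * poissonPMF ν x)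
        ≤ p₁ ^ t * p₂ ^ (1 - t) *
            Real.exp (-∑ i, (t * μ i + (1 - t) * ν i - μ i ^ t * ν i ^ (1 - t)))) ∧
    ∑' x : Fin k → ℕ, min (p₁ * poissonPMF μ x) (p₂ * poissonPMF ν x)
      ≤ max p₁ p₂ * Real.exp (-CHdiv μ ν) := by
  have main : ∀ t ∈ Set.Icc (0 : ℝ) 1,
      ∑' x : Fin k → ℕ, min (p₁ * poissonPMF μ x) (p₂ * poissonPMF ν x)
        ≤ p₁ ^ t * p₂ ^ (1 - t) *
            Real.exp (-∑ i, (t * μ i + (1 - t) * ν i - μ i ^ t * ν i ^ (1 - t))) := by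
    rintro t ⟨h0, h1⟩
    refine Real.tsum_le_of_sum_le (fun x => ?_) (fun s => ?_)
    · exact le_min (mul_pos hp₁ (aux_pos μ hμ x)).le (mul_pos hp₂ (aux_pos ν hν x)).le
    · refine le_trans ?_ (mul_le_mul_of_nonneg_left
        (aux_sum (fun i => t * μ i + (1 - t) * ν i) (fun i => μ i ^ t * ν i ^ (1 - t))
          (fun i => mul_pos (Real.rpow_pos_of_pos (hμ i) _) (Real.rpow_pos_of_pos (hν i) _)) s)
        (by positivity))
      rw [Finset.mul_sum]
      refine Finset.sum_le_sum fun x _ => ?_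
      refine (aux_min (mul_pos hp₁ (aux_pos μ hμ x)) (mul_pos hp₂ (aux_pos ν hν x)) h0 h1).trans
        (le_of_eq ?_)
      rw [Real.mul_rpow hp₁.le (aux_pos μ hμ x).le, Real.mul_rpow hp₂.le (aux_pos ν hν x).le,
        mul_mul_mul_comm]
      congr 1
      unfold poissonPMF
      have hn : ∀ (l : Fin k → ℝ), (∀ i, 0 < l i) → ∀ i ∈ Finset.univ,
          0 ≤ l i ^ x i * Real.exp (-l i) / (Nat.factorial (x i)) := by
        intro l hl i _
        have := hl i
        positivity
      rw [← Real.finsetProd_rpow _ _ (hn μ hμ), ← Real.finsetProd_rpow _ _ (hn ν hν),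
        ← Finset.prod_mul_distrib]
      exact Finset.prod_congr rfl fun i _ => aux_one (hμ i) (hν i) (x i)
  refine ⟨main, ?_⟩
  have hc : ContinuousOn (fun t : ℝ => ∑ i, (t * μ i + (1 - t) * ν i - μ i ^ t * ν i ^ (1 - t)))
      (Set.Icc (0 : ℝ) 1) := by
    refine Continuous.continuousOn (continuous_finsetSum _ fun i _ => ?_)
    have c1 : Continuous fun t : ℝ => μ i ^ t := Real.continuous_const_rpow (hμ i).ne'
    have c2 : Continuous fun t : ℝ => ν i ^ (1 - t) :=
      (Real.continuous_const_rpow (hν i).ne').comp (by fun_prop)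
    fun_prop
  obtain ⟨t, ht, he⟩ := isCompact_Icc.exists_sSup_image_eq
    (Set.nonempty_Icc.2 (zero_le_one (α := ℝ))) hc
  unfold CHdiv
  rw [he]
  exact (main t ht).trans
    (mul_le_mul_of_nonneg_right (aux_max hp₁ hp₂ ht.1 ht.2) (Real.exp_pos _).le)
end

section
/- Let X be a countable set, k ≥ 2, let P₁,...,P_k : X → [0,1] be probability mass functions on X, and let p₁,...,p_k > 0 with ∑_{j=1}^k p_j = 1. Let f : X → {1,...,k} be any maximum-a-posteriori rule, i.e., p_{f(x)} P_{f(x)}(x) = max_{j} p_j P_j(x) for every x ∈ X. Then the error probability ∑_{i=1}^k p_i ∑_{x : f(x) ≠ i} P_i(x) is at most ∑_{1 ≤ i < j ≤ k} ∑_{x ∈ X} min(p_i P_i(x), p_j P_j(x)). -/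
open scoped BigOperators

lemma aux_pt {k : ℕ} (a : Fin k → ℝ) (h0 : ∀ i, 0 ≤ a i) (m : Fin k) (hm : ∀ j, a j ≤ a m) :
    ∑ i, (if m ≠ i then a i else 0) ≤ ∑ i, ∑ j, if i < j then min (a i) (a j) else 0 := by
  have e1 : ∑ i, (if m ≠ i then a i else 0)
      = ∑ i, ∑ j, ((if j = m then (if i < m then a i else 0) else 0)
        + (if i = m then (if m < j then a j else 0) else 0)) := by
    simp only [Finset.sum_add_distrib]
    rw [Finset.sum_comm (f := fun i j => if i = m then (if m < j then a j else 0) else 0)]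
    simp only [Finset.sum_ite_eq', Finset.mem_univ, if_true]
    rw [← Finset.sum_add_distrib]
    refine Finset.sum_congr rfl fun i _ => ?_
    rcases lt_trichotomy i m with h | h | h
    · simp [h, h.ne', h.le, not_lt.2 h.le]
    · simp [h]
    · simp [h, h.ne, not_lt.2 h.le]
  rw [e1]
  refine Finset.sum_le_sum fun i _ => Finset.sum_le_sum fun j _ => ?_
  have hn := le_min (h0 i) (h0 j)
  by_cases hj : j = m
  · subst hj
    by_cases hi : i = j
    · subst hi; simp
    · simp [hi, min_eq_left (hm i)]
  · by_cases hi : i = m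
    · subst hi
      simp [hj, min_eq_right (hm j)]
    · simp only [hj, hi, if_false, add_zero]
      split_ifs <;> simp [h0]

theorem statement_7 (X : Type*) [Countable X] (k : ℕ) (hk : 2 ≤ k)
    (P : Fin k → X → ℝ) (hP0 : ∀ j x, 0 ≤ P j x) (hP1 : ∀ j x, P j x ≤ 1)
    (hPsum : ∀ j, ∑' x, P j x = 1)
    (p : Fin k → ℝ) (hp : ∀ j, 0 < p j) (hpsum : ∑ j, p j = 1)
    (f : X → Fin k) (hf : ∀ x j, p j * P j x ≤ p (f x) * P (f x) x) :
    ∑ i, p i * ∑' x, (if f x ≠ i then P i x else 0)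
      ≤ ∑ i, ∑ j, if i < j then ∑' x, min (p i * P i x) (p j * P j x) else 0 := by
  have hs : ∀ j, Summable (P j) := fun j => by
    by_contra h
    have := hPsum j
    rw [tsum_eq_zero_of_not_summable h] at this
    exact zero_ne_one this
  have ha : ∀ j x, 0 ≤ p j * P j x := fun j x => mul_nonneg (hp j).le (hP0 j x)
  have s1 : ∀ i, Summable fun x => if f x ≠ i then p i * P i x else 0 := fun i =>
    Summable.of_nonneg_of_le (fun x => by split_ifs <;> simp [ha])
      (fun x => by split_ifs <;> simp [ha]) ((hs i).mul_left (p i))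
  have s2 : ∀ i j, Summable fun x => if i < j then min (p i * P i x) (p j * P j x) else 0 :=
    fun i j => Summable.of_nonneg_of_le
      (fun x => by split_ifs <;> simp [ha])
      (fun x => by split_ifs <;> simp [ha]) ((hs i).mul_left (p i))
  have e1 : ∀ i, p i * ∑' x, (if f x ≠ i then P i x else 0)
      = ∑' x, if f x ≠ i then p i * P i x else 0 := fun i => by
    rw [← tsum_mul_left]; simp only [mul_ite, mul_zero]
  have e2 : ∀ i j, (if i < j then ∑' x, min (p i * P i x) (p j * P j x) else 0)
      = ∑' x, if i < j then min (p i * P i x) (p j * P j x) else 0 := fun i j => by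
    split_ifs <;> simp
  simp only [e1, e2]
  rw [← Summable.tsum_finsetSum fun i _ => s1 i]
  simp only [← Summable.tsum_finsetSum fun j _ => s2 _ j]
  rw [← Summable.tsum_finsetSum fun i _ => summable_sum fun j _ => s2 i j]
  exact Summable.tsum_le_tsum (fun x => aux_pt (fun i => p i * P i x) (fun i => ha i x) (f x) (hf x))
    (summable_sum fun i _ => s1 i) (summable_sum fun i _ => summable_sum fun j _ => s2 i j)
end

section
/- Let X be a countable set, k ≥ 2, let P₁,...,P_k : X → [0,1] be probability mass functions on X, and let p₁,...,p_k > 0 with ∑_{j=1}^k p_j = 1. Then for EVERY function f : X → {1,...,k}, the error probability ∑_{i=1}^k p_i ∑_{x : f(x) ≠ i} P_i(x) is at least (1/(k−1)) · ∑_{1 ≤ i < j ≤ k} ∑_{x ∈ X} min(p_i P_i(x), p_j P_j(x)). -/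
open scoped BigOperators

theorem statement_8 (X : Type*) [Countable X] (k : ℕ) (hk : 2 ≤ k)
    (P : Fin k → X → ℝ) (hP0 : ∀ j x, 0 ≤ P j x) (hP1 : ∀ j x, P j x ≤ 1)
    (hPsum : ∀ j, ∑' x, P j x = 1)
    (p : Fin k → ℝ) (hp : ∀ j, 0 < p j) (hpsum : ∑ j, p j = 1)
    (f : X → Fin k) :
    (1 / ((k : ℝ) - 1)) *
        ∑ i, ∑ j, (if i < j then ∑' x, min (p i * P i x) (p j * P j x) else 0)
      ≤ ∑ i, p i * ∑' x, (if f x ≠ i then P i x else 0) := by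
  have hS : ∀ j, Summable (P j) := fun j => by
    by_contra h
    have := hPsum j
    rw [tsum_eq_zero_of_not_summable h] at this
    exact zero_ne_one this
  have hSf : ∀ i, Summable (fun x => if f x ≠ i then P i x else 0) := fun i => by
    refine Summable.of_nonneg_of_le (fun x => ?_) (fun x => ?_) (hS i)
    · split_ifs
      · exact hP0 i x
      · exact le_rfl
    · split_ifs
      · exact le_rfl
      · exact hP0 i x
  set B : Fin k → ℝ := fun i => p i * ∑' x, (if f x ≠ i then P i x else 0) with hB
  have hn : ∀ i x, 0 ≤ p i * P i x := fun i x => mul_nonneg (hp i).le (hP0 i x)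
  have key : ∀ i j, i < j → ∑' x, min (p i * P i x) (p j * P j x) ≤ B i + B j := by
    intro i j hij
    simp only [hB]
    rw [← tsum_mul_left, ← tsum_mul_left,
      ← ((hSf i).mul_left (p i)).tsum_add ((hSf j).mul_left (p j))]
    refine Summable.tsum_le_tsum (fun x => ?_) ?_
      (((hSf i).mul_left (p i)).add ((hSf j).mul_left (p j)))
    · have h1 := hn i x
      have h2 := hn j x
      have h3 := min_le_left (p i * P i x) (p j * P j x)
      have h4 := min_le_right (p i * P i x) (p j * P j x)
      by_cases hi : f x = i
      · have hj : f x ≠ j := by rw [hi]; exact hij.ne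
        simp only [hi, ne_eq, not_true_eq_false, if_false, hij.ne, not_false_eq_true, if_true]
        linarith
      · rw [if_pos hi]
        split_ifs <;> linarith
    · exact Summable.of_nonneg_of_le (fun x => le_min (hn i x) (hn j x))
        (fun x => min_le_left _ _) ((hS i).mul_left (p i))
  have hk1 : (0 : ℝ) < (k : ℝ) - 1 := by
    have : (2 : ℝ) ≤ k := by exact_mod_cast hk
    linarith
  rw [one_div, inv_mul_le_iff₀ hk1]
  calc _ ≤ ∑ i, ∑ j, ((if i < j then B i else 0) + (if i < j then B j else 0)) := by
        refine Finset.sum_le_sum fun i _ => Finset.sum_le_sum fun j _ => ?_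
        split_ifs with h
        · exact key i j h
        · simp
    _ = ∑ i, ∑ j, ((if i < j then B i else 0) + (if j < i then B i else 0)) := by
        simp only [Finset.sum_add_distrib]
        congr 1
        exact Finset.sum_comm
    _ = ∑ i, ∑ j, (B i - if i = j then B i else 0) := by
        refine Finset.sum_congr rfl fun i _ => Finset.sum_congr rfl fun j _ => ?_
        rcases lt_trichotomy i j with h | h | h
        · simp [h, h.ne, h.not_gt]
        · simp [h]
        · simp [h, h.ne', h.not_gt]
    _ = ((k : ℝ) - 1) * ∑ i, B i := by
        simp [Finset.sum_sub_distrib, Finset.mul_sum, sub_mul]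
end

section
/- Let X be a countable set, k ≥ 2, let P₁,...,P_k : X → [0,1] be probability mass functions on X, let p₁,...,p_k > 0 with ∑_{j=1}^k p_j = 1, and let A, B be disjoint nonempty subsets of {1,...,k}. Set S = ∑_{x ∈ X} ∑_{i ∈ A} ∑_{j ∈ B} min(p_i P_i(x), p_j P_j(x)) and P̃_e = ∑_{x ∈ X} min(∑_{i ∈ A} p_i P_i(x), ∑_{j ∈ B} p_j P_j(x)). Then S/(|A|·|B|) ≤ P̃_e ≤ S. -/
open scoped BigOperators

lemma min_sum_le_aux {ι : Type*} (A : Finset ι) (a : ι → ℝ) (ha : ∀ i, 0 ≤ a i) (e : ℝ)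
    (he : 0 ≤ e) : min (∑ i ∈ A, a i) e ≤ ∑ i ∈ A, min (a i) e := by
  classical
  induction A using Finset.induction_on with
  | empty => simp
  | insert i s hi ih =>
    rw [Finset.sum_insert hi, Finset.sum_insert hi]
    have h0 : 0 ≤ ∑ i ∈ s, a i := Finset.sum_nonneg fun i _ => ha i
    have h1 := ha i
    refine le_trans ?_ (add_le_add_right ih _)
    rcases le_total (a i) e with h | h <;> rcases le_total (∑ i ∈ s, a i) e with h' | h' <;>
      simp only [min_eq_left h, min_eq_right h, min_eq_left h', min_eq_right h'] <;>
      first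
      | exact min_le_left _ _
      | exact (min_le_right _ _).trans (by linarith)

lemma min_sum_sum_le_aux {ι : Type*} (A B : Finset ι) (a : ι → ℝ) (ha : ∀ i, 0 ≤ a i) :
    min (∑ i ∈ A, a i) (∑ j ∈ B, a j) ≤ ∑ i ∈ A, ∑ j ∈ B, min (a i) (a j) := by
  refine (min_sum_le_aux A a ha _ (Finset.sum_nonneg fun i _ => ha i)).trans ?_
  refine Finset.sum_le_sum fun i _ => ?_
  rw [min_comm]
  refine (min_sum_le_aux B a ha _ (ha i)).trans (le_of_eq ?_)
  exact Finset.sum_congr rfl fun j _ => min_comm _ _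

lemma sum_sum_min_le_aux {ι : Type*} (A B : Finset ι) (a : ι → ℝ) (ha : ∀ i, 0 ≤ a i) :
    ∑ i ∈ A, ∑ j ∈ B, min (a i) (a j)
      ≤ ((A.card : ℝ) * B.card) * min (∑ i ∈ A, a i) (∑ j ∈ B, a j) := by
  have h : ∀ i ∈ A, ∀ j ∈ B, min (a i) (a j) ≤ min (∑ i ∈ A, a i) (∑ j ∈ B, a j) :=
    fun i hi j hj => min_le_min (Finset.single_le_sum (fun i _ => ha i) hi)
      (Finset.single_le_sum (fun i _ => ha i) hj)
  refine (Finset.sum_le_sum fun i hi => Finset.sum_le_sum fun j hj => h i hi j hj).trans ?_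
  simp [mul_assoc]

theorem statement_9 (X : Type*) [Countable X] (k : ℕ) (hk : 2 ≤ k)
    (P : Fin k → X → ℝ) (hP0 : ∀ j x, 0 ≤ P j x) (hP1 : ∀ j x, P j x ≤ 1)
    (hPsum : ∀ j, ∑' x, P j x = 1)
    (p : Fin k → ℝ) (hp : ∀ j, 0 < p j) (hpsum : ∑ j, p j = 1)
    (A B : Finset (Fin k)) (hAB : Disjoint A B) (hA : A.Nonempty) (hB : B.Nonempty) :
    (∑' x, ∑ i ∈ A, ∑ j ∈ B, min (p i * P i x) (p j * P j x)) / ((A.card : ℝ) * B.card)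
        ≤ ∑' x, min (∑ i ∈ A, p i * P i x) (∑ j ∈ B, p j * P j x) ∧
      ∑' x, min (∑ i ∈ A, p i * P i x) (∑ j ∈ B, p j * P j x)
        ≤ ∑' x, ∑ i ∈ A, ∑ j ∈ B, min (p i * P i x) (p j * P j x) := by
  have hs : ∀ j, Summable (fun x => p j * P j x) := fun j => by
    refine Summable.mul_left _ ?_
    by_contra h
    have := hPsum j
    rw [tsum_eq_zero_of_not_summable h] at this
    exact zero_ne_one this
  have h0 : ∀ x j, 0 ≤ p j * P j x := fun x j => mul_nonneg (hp j).le (hP0 j x)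
  have hS : Summable (fun x => ∑ i ∈ A, ∑ j ∈ B, min (p i * P i x) (p j * P j x)) :=
    summable_sum fun i _ => summable_sum fun j _ =>
      Summable.of_nonneg_of_le (fun x => le_min (h0 x i) (h0 x j)) (fun x => min_le_left _ _) (hs i)
  have hT : Summable (fun x => min (∑ i ∈ A, p i * P i x) (∑ j ∈ B, p j * P j x)) :=
    Summable.of_nonneg_of_le
      (fun x => le_min (Finset.sum_nonneg fun i _ => h0 x i) (Finset.sum_nonneg fun i _ => h0 x i))
      (fun x => min_sum_sum_le_aux A B (fun i => p i * P i x) (h0 x)) hS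
  constructor
  · have hc : (0 : ℝ) < (A.card : ℝ) * B.card :=
      mul_pos (Nat.cast_pos.2 hA.card_pos) (Nat.cast_pos.2 hB.card_pos)
    rw [div_le_iff₀' hc, ← tsum_mul_left]
    exact hS.tsum_le_tsum (fun x => sum_sum_min_le_aux A B (fun i => p i * P i x) (h0 x))
      (hT.mul_left _)
  · exact hT.tsum_le_tsum (fun x => min_sum_sum_le_aux A B (fun i => p i * P i x) (h0 x)) hS
end

section
/- Let p ∈ ℝ^k have all entries positive with ∑_{i=1}^k p_i = 1, let P = diag(p), and let Q be a symmetric k×k real matrix. Suppose p = ∑_{i=1}^h w_i where each w_i ∈ ℝ^k satisfies PQ w_i = λ_i w_i for pairwise distinct real numbers λ₁,...,λ_h. Then ∑_{i=1}^h w_i · (P⁻¹ w_i) = 1. -/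
open scoped BigOperators

theorem statement_11 (k h : ℕ) (p : Fin k → ℝ) (hp : ∀ i, 0 < p i) (hpsum : ∑ i, p i = 1)
    (Q : Matrix (Fin k) (Fin k) ℝ) (hQ : Q.IsSymm)
    (w : Fin h → Fin k → ℝ) (lam : Fin h → ℝ) (hlam : Function.Injective lam)
    (hdecomp : p = ∑ i, w i)
    (heig : ∀ i, (Matrix.diagonal p * Q).mulVec (w i) = lam i • w i) :
    ∑ i, ∑ j, w i j * w i j / p j = 1 := by
  have hq : ∀ i m, Q.mulVec (w i) m = lam i * (w i m / p m) := by
    intro i m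
    have h1 := congrFun (heig i) m
    rw [← Matrix.mulVec_mulVec, Matrix.mulVec_diagonal] at h1
    simp only [Pi.smul_apply, smul_eq_mul] at h1
    have := (hp m).ne'
    field_simp
    linarith
  have horth : ∀ i l, l ≠ i → ∑ m, w i m * w l m / p m = 0 := by
    intro i l hne
    have key : w i ⬝ᵥ Q.mulVec (w l) = w l ⬝ᵥ Q.mulVec (w i) := by
      rw [Matrix.dotProduct_mulVec, ← Matrix.mulVec_transpose, hQ.eq, dotProduct_comm]
    have e1 : w i ⬝ᵥ Q.mulVec (w l) = lam l * ∑ m, w i m * w l m / p m := by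
      simp only [dotProduct, hq, Finset.mul_sum]
      exact Finset.sum_congr rfl fun m _ => by ring
    have e2 : w l ⬝ᵥ Q.mulVec (w i) = lam i * ∑ m, w i m * w l m / p m := by
      simp only [dotProduct, hq, Finset.mul_sum]
      exact Finset.sum_congr rfl fun m _ => by ring
    rw [e1, e2] at key
    by_contra h0
    exact hne (hlam (mul_right_cancel₀ h0 key))
  have hpm : ∀ m, ∑ l, w l m = p m := by
    intro m
    have := congrFun hdecomp m
    rw [Finset.sum_apply] at this
    exact this.symm
  have hdiag : ∀ i, ∑ m, w i m * w i m / p m = ∑ m, w i m := by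
    intro i
    rw [← Finset.sum_eq_single (f := fun l => ∑ m, w i m * w l m / p m) (s := Finset.univ) i
      (fun l _ hl => horth i l hl) (by simp), Finset.sum_comm]
    refine Finset.sum_congr rfl fun m _ => ?_
    rw [← Finset.sum_div, ← Finset.mul_sum, hpm, mul_div_assoc, div_self (hp m).ne', mul_one]
  simp only [hdiag]
  rw [Finset.sum_comm]
  simp only [hpm, hpsum]
end

section
/- Let p ∈ ℝ^k have all entries positive, let P = diag(p), and let Q be a symmetric k×k real matrix. Let a, b ∈ {1,...,k} and suppose e_a − e_b = ∑_{i=1}^h d_i where PQ d_i = λ_i d_i for pairwise distinct real numbers λ₁,...,λ_h. Then d_i · (P⁻¹ d_i) ≥ 0 for every i; moreover, if the a-th and b-th rows of Q are not equal, then there exists an index i with λ_i ≠ 0 and d_i · (P⁻¹ d_i) > 0. -/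
open scoped BigOperators

theorem statement_13 (k h : ℕ) (p : Fin k → ℝ) (hp : ∀ i, 0 < p i)
    (Q : Matrix (Fin k) (Fin k) ℝ) (hQ : Q.IsSymm)
    (a b : Fin k) (d : Fin h → Fin k → ℝ) (lam : Fin h → ℝ) (hlam : Function.Injective lam)
    (hdecomp : (Pi.single a 1 - Pi.single b 1 : Fin k → ℝ) = ∑ i, d i)
    (heig : ∀ i, (Matrix.diagonal p * Q).mulVec (d i) = lam i • d i) :
    (∀ i, 0 ≤ ∑ j, d i j * d i j / p j) ∧
      ((fun j => Q a j) ≠ (fun j => Q b j) →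
        ∃ i, lam i ≠ 0 ∧ 0 < ∑ j, d i j * d i j / p j) := by
  have hnn : ∀ i j, 0 ≤ d i j * d i j / p j := fun i j =>
    div_nonneg (mul_self_nonneg _) (hp j).le
  refine ⟨fun i => Finset.sum_nonneg fun j _ => hnn i j, fun hne => ?_⟩
  by_contra hcon
  push Not at hcon
  apply hne
  have hz : ∀ i, lam i • d i = 0 := by
    intro i
    by_cases hl : lam i = 0
    · simp [hl]
    · have h0 : ∑ j, d i j * d i j / p j = 0 :=
        le_antisymm (hcon i hl) (Finset.sum_nonneg fun j _ => hnn i j)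
      rw [Finset.sum_eq_zero_iff_of_nonneg (fun j _ => hnn i j)] at h0
      have : d i = 0 := by
        funext j
        have h1 := h0 j (Finset.mem_univ j)
        simpa [(hp j).ne'] using h1
      simp [this]
  have hm : (Matrix.diagonal p * Q).mulVec (Pi.single a 1 - Pi.single b 1 : Fin k → ℝ) = 0 := by
    rw [hdecomp, Matrix.mulVec_sum]
    exact Finset.sum_eq_zero fun i _ => (heig i).trans (hz i)
  funext j
  have hj := congrFun hm j
  rw [Matrix.mulVec_sub] at hj
  simp only [Matrix.mulVec_single_one, Pi.sub_apply, Matrix.col_apply, Matrix.diagonal_mul,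
    Pi.zero_apply] at hj
  rw [← mul_sub] at hj
  have h2 := (mul_eq_zero.mp hj).resolve_left (hp j).ne'
  rw [← hQ.apply a j, ← hQ.apply b j]
  linarith
end

section
/- Let p ∈ ℝ^k have all entries positive, let P = diag(p), and let Q be a symmetric k×k real matrix. Let λ₁,...,λ_h be pairwise distinct real numbers and for a, b ∈ {1,...,k} suppose e_a = ∑_{i=1}^h w_i(a) and e_b = ∑_{i=1}^h w_i(b), where PQ w_i(a) = λ_i w_i(a) and PQ w_i(b) = λ_i w_i(b) for each i. Define ζ_i(a,b) = w_i(a) · (P⁻¹ w_i(b)). Then for every i, ζ_i(a,a) − 2ζ_i(a,b) + ζ_i(b,b) ≥ 0, and equality holds for all i simultaneously if and only if a = b. -/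
open scoped BigOperators

theorem statement_14 (k h : ℕ) (p : Fin k → ℝ) (hp : ∀ i, 0 < p i)
    (Q : Matrix (Fin k) (Fin k) ℝ) (hQ : Q.IsSymm)
    (lam : Fin h → ℝ) (hlam : Function.Injective lam)
    (a b : Fin k) (wa wb : Fin h → Fin k → ℝ)
    (ha : (Pi.single a 1 : Fin k → ℝ) = ∑ i, wa i)
    (hb : (Pi.single b 1 : Fin k → ℝ) = ∑ i, wb i)
    (heiga : ∀ i, (Matrix.diagonal p * Q).mulVec (wa i) = lam i • wa i)
    (heigb : ∀ i, (Matrix.diagonal p * Q).mulVec (wb i) = lam i • wb i) :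
    (∀ i, 0 ≤ (∑ j, wa i j * wa i j / p j) - 2 * (∑ j, wa i j * wb i j / p j)
        + ∑ j, wb i j * wb i j / p j) ∧
    ((∀ i, (∑ j, wa i j * wa i j / p j) - 2 * (∑ j, wa i j * wb i j / p j)
        + (∑ j, wb i j * wb i j / p j) = 0) ↔ a = b) := by
  have key : ∀ i, (∑ j, wa i j * wa i j / p j) - 2 * (∑ j, wa i j * wb i j / p j)
        + (∑ j, wb i j * wb i j / p j) = ∑ j, (wa i j - wb i j) ^ 2 / p j := by
    intro i
    rw [Finset.mul_sum, ← Finset.sum_sub_distrib, ← Finset.sum_add_distrib]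
    refine Finset.sum_congr rfl fun j _ => ?_
    ring
  have nn : ∀ i j, 0 ≤ (wa i j - wb i j) ^ 2 / p j := fun i j =>
    div_nonneg (sq_nonneg _) (hp j).le
  refine ⟨fun i => ?_, fun H => ?_, fun hab => ?_⟩
  · rw [key]
    exact Finset.sum_nonneg fun j _ => nn i j
  · have hw : wa = wb := by
      funext i j
      have h1 := H i
      rw [key, Finset.sum_eq_zero_iff_of_nonneg (fun j _ => nn i j)] at h1
      have h2 := h1 j (Finset.mem_univ j)
      rw [div_eq_zero_iff] at h2
      rcases h2 with h2 | h2
      · exact sub_eq_zero.mp (pow_eq_zero_iff (two_ne_zero) |>.mp h2)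
      · exact absurd h2 (hp j).ne'
    rw [hw, ← hb] at ha
    by_contra hne
    have := congrFun ha a
    simp [Pi.single_apply, hne] at this
  · subst hab
    have hs : ∑ i, (wa i - wb i) = 0 := by
      rw [Finset.sum_sub_distrib, ← ha, ← hb, sub_self]
    have hz : ∀ i, wa i - wb i = 0 := by
      have hind := (Module.End.eigenspaces_iSupIndep
        (Matrix.toLin' (Matrix.diagonal p * Q))).comp hlam
      rw [iSupIndep_iff_finset_sum_eq_zero_imp_eq_zero] at hind
      intro i
      refine hind Finset.univ (fun i => wa i - wb i) (fun i _ => ?_) hs i (Finset.mem_univ i)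
      simp [Module.End.mem_eigenspace_iff, Matrix.mulVec_sub, heiga, heigb, smul_sub]
    intro i
    rw [key]
    refine Finset.sum_eq_zero fun j _ => ?_
    have := congrFun (hz i) j
    simp only [Pi.sub_apply, Pi.zero_apply] at this
    simp [this]
end

section
/- Let p ∈ ℝ^k have all entries positive with ∑_{i=1}^k p_i = 1, let P = diag(p), and let Q be a symmetric k×k real matrix with nonnegative entries. Suppose p = ∑_{i=1}^h w_i where PQ w_i = λ_i w_i for pairwise distinct real numbers λ₁,...,λ_h, let λ₁* := max_i |λ_i| > 0, and let λ' ∈ (0, λ₁*]. Let R ∈ ℕ, σ ∈ {1,...,k}, x > 0, and let N₀, N₁, ..., N_R ∈ ℝ^k with N₀ = e_σ satisfy: for all 0 ≤ r < R and all w ∈ ℝ^k with w · (P w) = 1, |w · N_{r+1} − w · (PQ N_r)| ≤ (x λ'/2) · (λ'²/(2λ₁*))^r. Then for all 0 ≤ r ≤ R, |∑_{j=1}^k (N_r)_j| ≤ (λ₁*)^r · √k · ((min_i p_i)^{−1/2} + x). -/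
open scoped BigOperators
open Matrix

theorem aux_orth {k h : ℕ} (p : Fin k → ℝ) (hp : ∀ i, 0 < p i)
    (Q : Matrix (Fin k) (Fin k) ℝ) (hQ : Q.IsSymm)
    (w : Fin h → Fin k → ℝ) (lam : Fin h → ℝ) (hlam : Function.Injective lam)
    (heig : ∀ i, (Matrix.diagonal p * Q).mulVec (w i) = lam i • w i)
    (i j : Fin h) (hij : i ≠ j) : ∑ a, p a * ((w i a / p a) * (w j a / p a)) = 0 := by
  have e : ∀ i a, p a * (Q.mulVec (w i)) a = lam i * w i a := by
    intro i a
    have := congrFun (heig i) a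
    rw [← Matrix.mulVec_mulVec, Matrix.mulVec_diagonal] at this
    simpa using this
  have key : ∀ i j, lam i * ∑ a, p a * ((w i a / p a) * (w j a / p a))
      = Q.mulVec (w i) ⬝ᵥ w j := by
    intro i j
    rw [Finset.mul_sum, dotProduct]
    refine Finset.sum_congr rfl fun a _ => ?_
    have := e i a
    have hpa := (hp a).ne'
    field_simp
    linear_combination (-w j a) * this
  have sy : Q.mulVec (w i) ⬝ᵥ w j = Q.mulVec (w j) ⬝ᵥ w i := by
    rw [dotProduct_comm, Matrix.dotProduct_mulVec, ← Matrix.mulVec_transpose, hQ.eq]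
  have h1 := key i j
  have h2 := key j i
  have h3 : ∑ a, p a * ((w i a / p a) * (w j a / p a))
      = ∑ a, p a * ((w j a / p a) * (w i a / p a)) :=
    Finset.sum_congr rfl fun a _ => by ring
  rw [← h3] at h2
  have h4 : (lam i - lam j) * ∑ a, p a * ((w i a / p a) * (w j a / p a)) = 0 := by
    linear_combination h1 - h2 + sy
  rcases mul_eq_zero.1 h4 with h5 | h5
  · exact absurd (hlam (sub_eq_zero.1 h5)) hij
  · exact h5

theorem aux_quad {k h : ℕ} (p : Fin k → ℝ) (u : Fin h → Fin k → ℝ)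
    (ho : ∀ i j, i ≠ j → ∑ a, p a * (u i a * u j a) = 0) (c : Fin h → ℝ) :
    ∑ a, p a * (∑ i, c i * u i a) ^ 2 = ∑ i, c i ^ 2 * ∑ a, p a * (u i a * u i a) := by
  have : ∀ a, p a * (∑ i, c i * u i a) ^ 2
      = ∑ i, ∑ j, c i * c j * (p a * (u i a * u j a)) := by
    intro a
    rw [sq, Finset.sum_mul_sum, Finset.mul_sum]
    refine Finset.sum_congr rfl fun i _ => ?_
    rw [Finset.mul_sum]
    exact Finset.sum_congr rfl fun j _ => by ring
  simp_rw [this]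
  rw [Finset.sum_comm]
  refine Finset.sum_congr rfl fun i _ => ?_
  rw [Finset.sum_comm, Finset.sum_eq_single i]
  · rw [← Finset.mul_sum]; ring
  · intro j _ hj
    rw [← Finset.mul_sum, ho i j hj.symm, mul_zero]
  · simp

theorem aux_scale {k : ℕ} (p : Fin k → ℝ) (hp : ∀ i, 0 < p i) (e : Fin k → ℝ) (ε : ℝ)
    (hε : 0 ≤ ε)
    (H : ∀ v : Fin k → ℝ, v ⬝ᵥ (Matrix.diagonal p).mulVec v = 1 → |v ⬝ᵥ e| ≤ ε)
    (v : Fin k → ℝ) (c : ℝ) (hc : 0 ≤ c) (hv : ∑ a, p a * v a ^ 2 ≤ c ^ 2) :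
    |v ⬝ᵥ e| ≤ c * ε := by
  have hq : ∀ v : Fin k → ℝ, v ⬝ᵥ (Matrix.diagonal p).mulVec v = ∑ a, p a * v a ^ 2 := by
    intro v
    rw [dotProduct]
    refine Finset.sum_congr rfl fun a _ => ?_
    rw [Matrix.mulVec_diagonal]; ring
  have hn : 0 ≤ ∑ a, p a * v a ^ 2 :=
    Finset.sum_nonneg fun a _ => mul_nonneg (hp a).le (sq_nonneg _)
  rcases hn.eq_or_lt with h0 | h0
  · have : v = 0 := by
      funext a
      have := (Finset.sum_eq_zero_iff_of_nonneg
        (fun a _ => mul_nonneg (hp a).le (sq_nonneg (v a)))).1 h0.symm a (Finset.mem_univ a)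
      simpa [(hp a).ne'] using this
    rw [this]; simpa using mul_nonneg hc hε
  · set s := Real.sqrt (∑ a, p a * v a ^ 2) with hs
    have hs0 : 0 < s := Real.sqrt_pos.2 h0
    have hss : s ^ 2 = ∑ a, p a * v a ^ 2 := Real.sq_sqrt hn
    have hsc : s ≤ c := abs_le_of_sq_le_sq' (by rw [hss]; exact hv) hc |>.2
    have := H (s⁻¹ • v) (by
      rw [hq]
      have : ∀ a, p a * (s⁻¹ • v) a ^ 2 = (s ^ 2)⁻¹ * (p a * v a ^ 2) := by
        intro a; simp; ring
      simp_rw [this]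
      rw [← Finset.mul_sum, ← hss]
      exact inv_mul_cancel₀ (by positivity))
    rw [smul_dotProduct, smul_eq_mul, abs_mul, abs_of_pos (inv_pos.2 hs0),
      inv_mul_le_iff₀ hs0] at this
    exact this.trans (mul_le_mul_of_nonneg_right hsc hε)

theorem statement_15 (k h : ℕ) (hk : 0 < k) (hh : 0 < h)
    (p : Fin k → ℝ) (hp : ∀ i, 0 < p i) (hpsum : ∑ i, p i = 1)
    (Q : Matrix (Fin k) (Fin k) ℝ) (hQ : Q.IsSymm) (hQ0 : ∀ i j, 0 ≤ Q i j)
    (w : Fin h → Fin k → ℝ) (lam : Fin h → ℝ) (hlam : Function.Injective lam)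
    (hdecomp : p = ∑ i, w i)
    (heig : ∀ i, (Matrix.diagonal p * Q).mulVec (w i) = lam i • w i)
    (lamMax : ℝ) (hmaxle : ∀ i, |lam i| ≤ lamMax) (hmaxmem : ∃ i, lamMax = |lam i|)
    (hmaxpos : 0 < lamMax)
    (lam' : ℝ) (hlam' : 0 < lam') (hle : lam' ≤ lamMax)
    (R : ℕ) (σ : Fin k) (x : ℝ) (hx : 0 < x)
    (N : ℕ → Fin k → ℝ) (hN0 : N 0 = Pi.single σ 1)
    (hgood : ∀ r < R, ∀ v : Fin k → ℝ, v ⬝ᵥ (Matrix.diagonal p).mulVec v = 1 →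
      |v ⬝ᵥ N (r + 1) - v ⬝ᵥ (Matrix.diagonal p * Q).mulVec (N r)|
        ≤ x * lam' / 2 * (lam' ^ 2 / (2 * lamMax)) ^ r) :
    ∀ r ≤ R, |∑ j, N r j|
      ≤ lamMax ^ r * Real.sqrt k * ((⨅ i, p i) ^ (-(1 / 2) : ℝ) + x) := by
  set L := lamMax with hL
  have hdec : ∀ a, p a = ∑ i, w i a := fun a => by
    conv_lhs => rw [hdecomp]
    simp
  set u : Fin h → Fin k → ℝ := fun i a => w i a / p a with hu
  have ho : ∀ i j, i ≠ j → ∑ a, p a * (u i a * u j a) = 0 :=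
    fun i j hij => aux_orth p hp Q hQ w lam hlam heig i j hij
  have quad := aux_quad p u ho
  have hone : ∀ a, ∑ i, u i a = 1 := fun a => by
    simp only [hu]
    rw [← Finset.sum_div, ← hdec, div_self (hp a).ne']
  set U : ℕ → Fin k → ℝ := fun m a => ∑ i, lam i ^ m * u i a with hU
  have hUn : ∀ m, ∑ a, p a * U m a ^ 2 ≤ (L ^ m) ^ 2 := by
    intro m
    have h1 := quad (fun _ => 1)
    simp only [one_mul, one_pow, hone, mul_one, hpsum] at h1
    rw [quad (fun i => lam i ^ m)]
    calc _ ≤ ∑ i, (L ^ m) ^ 2 * ∑ a, p a * (u i a * u i a) := by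
          refine Finset.sum_le_sum fun i _ => ?_
          refine mul_le_mul_of_nonneg_right ?_
            (Finset.sum_nonneg fun a _ => mul_nonneg (hp a).le (mul_self_nonneg _))
          rw [← sq_abs, abs_pow]
          have := pow_le_pow_left₀ (abs_nonneg _) (hmaxle i) m
          exact pow_le_pow_left₀ (by positivity) this 2
      _ = (L ^ m) ^ 2 := by rw [← Finset.mul_sum, ← h1, mul_one]
  have hstep : ∀ m v, U m ⬝ᵥ (Matrix.diagonal p * Q).mulVec v = U (m + 1) ⬝ᵥ v := by
    intro m v
    rw [Matrix.dotProduct_mulVec]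
    congr 1
    funext b
    have e : ∀ i, p b * (Q.mulVec (w i)) b = lam i * w i b := by
      intro i
      have := congrFun (heig i) b
      rw [← Matrix.mulVec_mulVec, Matrix.mulVec_diagonal] at this
      simpa using this
    have e2 : ∀ i, ∑ a, w i a * Q a b = lam i * u i b := by
      intro i
      have : Q.mulVec (w i) b = ∑ a, w i a * Q a b := by
        simp only [Matrix.mulVec, dotProduct]
        refine Finset.sum_congr rfl fun a _ => ?_
        rw [hQ.apply a b, mul_comm]
      rw [← this]
      simp only [hu]
      have hpb := (hp b).ne'
      field_simp
      linear_combination e i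
    simp only [Matrix.vecMul, dotProduct, hU, Matrix.diagonal_mul]
    simp_rw [Finset.sum_mul]
    rw [Finset.sum_comm]
    refine Finset.sum_congr rfl fun i _ => ?_
    rw [pow_succ, mul_assoc, ← e2 i, Finset.mul_sum]
    refine Finset.sum_congr rfl fun a _ => ?_
    have hpa := (hp a).ne'
    simp only [hu]
    field_simp
  haveI : Nonempty (Fin k) := ⟨σ⟩
  set μ := ⨅ i, p i with hμ
  have hμ0 : 0 < μ := by
    obtain ⟨i, hi⟩ := exists_eq_ciInf_of_finite (f := p)
    rw [hμ, ← hi]; exact hp i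
  have hμσ : μ ≤ p σ := ciInf_le (Set.finite_range p).bddBelow σ
  set C := μ ^ (-(1 / 2) : ℝ) with hC
  have hC0 : 0 < C := Real.rpow_pos_of_pos hμ0 _
  have hC2 : μ * C ^ 2 = 1 := by
    rw [hC, ← Real.rpow_natCast, ← Real.rpow_mul hμ0.le]
    norm_num
    rw [Real.rpow_neg_one]
    exact mul_inv_cancel₀ hμ0.ne'
  have main : ∀ r ≤ R, ∀ m, |U m ⬝ᵥ N r| ≤ L ^ (m + r) * (C + x * (1 - (1 / 2) ^ r)) := by
    intro r
    induction r with
    | zero =>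
      intro _ m
      rw [hN0, dotProduct_single]
      simp only [mul_one, pow_zero, sub_self, mul_zero, add_zero]
      refine abs_le_of_sq_le_sq ?_ (by positivity)
      have h1 : p σ * U m σ ^ 2 ≤ (L ^ m) ^ 2 :=
        (Finset.single_le_sum (f := fun a => p a * U m a ^ 2)
          (fun a _ => mul_nonneg (hp a).le (sq_nonneg _)) (Finset.mem_univ σ)).trans (hUn m)
      have h2 : μ * U m σ ^ 2 ≤ (L ^ m) ^ 2 :=
        (mul_le_mul_of_nonneg_right hμσ (sq_nonneg _)).trans h1
      calc U m σ ^ 2 = C ^ 2 * (μ * U m σ ^ 2) := by linear_combination (-(U m σ ^ 2)) * hC2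
        _ ≤ C ^ 2 * (L ^ m) ^ 2 := mul_le_mul_of_nonneg_left h2 (sq_nonneg _)
        _ = _ := by ring
    | succ r ih =>
      intro hr m
      have i1 := ih (by omega) (m + 1)
      have i2 := aux_scale p hp (N (r + 1) - (Matrix.diagonal p * Q).mulVec (N r))
        (x * lam' / 2 * (lam' ^ 2 / (2 * L)) ^ r) (by positivity)
        (fun v hv => by rw [dotProduct_sub]; exact hgood r (by omega) v hv)
        (U m) (L ^ m) (by positivity) (hUn m)
      rw [dotProduct_sub, hstep] at i2
      have i3 : x * lam' / 2 * (lam' ^ 2 / (2 * L)) ^ r ≤ x * L / 2 * (L / 2) ^ r := by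
        have : lam' ^ 2 / (2 * L) ≤ L / 2 := by
          rw [div_le_iff₀ (by positivity)]
          nlinarith
        gcongr
      have i4 := i2.trans (mul_le_mul_of_nonneg_left i3 (by positivity : 0 ≤ L ^ m))
      have i5 : |U m ⬝ᵥ N (r + 1)| ≤ |U m ⬝ᵥ N (r + 1) - U (m + 1) ⬝ᵥ N r|
          + |U (m + 1) ⬝ᵥ N r| := by
        have := abs_add_le (U m ⬝ᵥ N (r + 1) - U (m + 1) ⬝ᵥ N r) (U (m + 1) ⬝ᵥ N r)
        simpa using this
      refine i5.trans ((add_le_add i4 i1).trans (le_of_eq ?_))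
      rw [div_pow, one_div, inv_pow, inv_pow]
      field_simp
      ring
  intro r hr
  have h0 := main r hr 0
  have hU0 : U 0 ⬝ᵥ N r = ∑ j, N r j := by
    simp [dotProduct, hU, hone]
  rw [hU0, zero_add] at h0
  refine h0.trans ?_
  have hk1 : 1 ≤ Real.sqrt k := by
    rw [Real.one_le_sqrt]; exact_mod_cast hk
  have hx2 : C + x * (1 - (1 / 2) ^ r) ≤ C + x := by
    have : 0 ≤ x * (1 / 2) ^ r := by positivity
    linarith
  have : L ^ r ≤ L ^ r * Real.sqrt k := le_mul_of_one_le_right (by positivity) hk1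
  calc _ ≤ L ^ r * (C + x) := mul_le_mul_of_nonneg_left hx2 (by positivity)
    _ ≤ _ := mul_le_mul_of_nonneg_right this (by positivity)
end

section
/- Let p ∈ ℝ^k have all entries positive, let P = diag(p), and let Q be a symmetric k×k real matrix. Let λ₁* > 0 and λ' ∈ (0, λ₁*]. Let R ∈ ℕ, σ ∈ {1,...,k}, x > 0, and let N₀, N₁, ..., N_R ∈ ℝ^k with N₀ = e_σ satisfy: for all 0 ≤ r < R and all w ∈ ℝ^k with w · (P w) = 1, |w · N_{r+1} − w · (PQ N_r)| ≤ (x λ'/2) · (λ'²/(2λ₁*))^r. Then for every w ∈ ℝ^k with PQ w = λ w for some real λ with |λ| ≤ λ₁*, and for all 0 ≤ r ≤ R, |(P⁻¹ w) · N_r| ≤ (λ₁*)^r · (|w_σ|/p_σ + x·√(w · (P⁻¹ w))). -/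
open scoped BigOperators
open Matrix

theorem statement_16 (k : ℕ) (p : Fin k → ℝ) (hp : ∀ i, 0 < p i)
    (Q : Matrix (Fin k) (Fin k) ℝ) (hQ : Q.IsSymm)
    (lamMax : ℝ) (hmaxpos : 0 < lamMax)
    (lam' : ℝ) (hlam' : 0 < lam') (hle : lam' ≤ lamMax)
    (R : ℕ) (σ : Fin k) (x : ℝ) (hx : 0 < x)
    (N : ℕ → Fin k → ℝ) (hN0 : N 0 = Pi.single σ 1)
    (hgood : ∀ r < R, ∀ v : Fin k → ℝ, v ⬝ᵥ (Matrix.diagonal p).mulVec v = 1 →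
      |v ⬝ᵥ N (r + 1) - v ⬝ᵥ (Matrix.diagonal p * Q).mulVec (N r)|
        ≤ x * lam' / 2 * (lam' ^ 2 / (2 * lamMax)) ^ r) :
    ∀ (w : Fin k → ℝ) (lam : ℝ),
      (Matrix.diagonal p * Q).mulVec w = lam • w → |lam| ≤ lamMax →
      ∀ r ≤ R, |(fun i => w i / p i) ⬝ᵥ N r|
        ≤ lamMax ^ r * (|w σ| / p σ + x * Real.sqrt (∑ i, w i * w i / p i)) := by
  intro w lam hw hlam
  set S := Real.sqrt (∑ i, w i * w i / p i) with hS
  set u : Fin k → ℝ := fun i => w i / p i with hu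
  have hterm : ∀ i ∈ Finset.univ, 0 ≤ w i * w i / p i := fun i _ =>
    div_nonneg (mul_self_nonneg _) (hp i).le
  have hsum : 0 ≤ ∑ i, w i * w i / p i := Finset.sum_nonneg hterm
  have hS0 : 0 ≤ S := Real.sqrt_nonneg _
  have hSS : S * S = ∑ i, w i * w i / p i := Real.mul_self_sqrt hsum
  have hPu : u ᵥ* Matrix.diagonal p = w := by
    ext i
    rw [Matrix.vecMul_diagonal]
    exact div_mul_cancel₀ _ (hp i).ne'
  have hQw : Q *ᵥ w = lam • u := by
    ext i
    have h := congrFun hw i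
    rw [← Matrix.mulVec_mulVec, Matrix.mulVec_diagonal] at h
    simp only [Pi.smul_apply, smul_eq_mul] at h ⊢
    have := (hp i).ne'
    simp only [hu]
    field_simp
    linarith
  have heig : ∀ n : Fin k → ℝ, u ⬝ᵥ (Matrix.diagonal p * Q).mulVec n = lam * (u ⬝ᵥ n) := by
    intro n
    rw [← Matrix.mulVec_mulVec, Matrix.dotProduct_mulVec, hPu, Matrix.dotProduct_mulVec,
      ← Matrix.mulVec_transpose, hQ.eq, hQw, smul_dotProduct, smul_eq_mul]
  have hkey : ∀ r < R, |u ⬝ᵥ N (r + 1) - lam * (u ⬝ᵥ N r)|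
      ≤ S * (x * lam' / 2 * (lam' ^ 2 / (2 * lamMax)) ^ r) := by
    intro r hr
    rcases hS0.eq_or_lt with h0 | hpos
    · have hz : ∑ i, w i * w i / p i = 0 := by rw [← hSS, ← h0]; ring
      have hu0 : u = 0 := by
        ext i
        have h := (Finset.sum_eq_zero_iff_of_nonneg hterm).1 hz i (Finset.mem_univ i)
        have hpi := (hp i).ne'
        have : w i = 0 := by simpa [hpi] using h
        simp [hu, this]
      rw [hu0, ← h0]
      simp
    · have h := hgood r hr (S⁻¹ • u) (by
        rw [Matrix.dotProduct_mulVec, Matrix.smul_vecMul, hPu, smul_dotProduct, dotProduct_smul]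
        have : w ⬝ᵥ u = S * S := by
          rw [hSS]
          simp only [dotProduct, hu, mul_div_assoc]
        rw [this]
        simp only [smul_eq_mul]
        field_simp)
      rw [smul_dotProduct, smul_dotProduct, heig, ← smul_sub, smul_eq_mul, abs_mul,
        abs_of_pos (inv_pos.2 hpos), inv_mul_le_iff₀ hpos] at h
      exact h
  have hbase : lam' ^ 2 / (2 * lamMax) ≤ lamMax / 2 := by
    rw [div_le_div_iff₀ (by positivity) (by norm_num)]
    nlinarith
  have hmain : ∀ r ≤ R, |u ⬝ᵥ N r|
      ≤ lamMax ^ r * (|w σ| / p σ + x * S * (1 - (1 / 2) ^ r)) := by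
    intro r
    induction r with
    | zero =>
      intro _
      rw [hN0]
      simp [hu, abs_div, abs_of_pos (hp σ)]
    | succ r ih =>
      intro hr
      have h1 := ih (by omega)
      have h2 := hkey r (by omega)
      have h3 : S * (x * lam' / 2 * (lam' ^ 2 / (2 * lamMax)) ^ r)
          ≤ S * (x * lamMax / 2 * (lamMax / 2) ^ r) := by gcongr
      have h4 : |lam * (u ⬝ᵥ N r)|
          ≤ lamMax * (lamMax ^ r * (|w σ| / p σ + x * S * (1 - (1 / 2) ^ r))) := by
        rw [abs_mul]
        exact mul_le_mul hlam h1 (abs_nonneg _) hmaxpos.le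
      have h5 := abs_sub_abs_le_abs_sub (u ⬝ᵥ N (r + 1)) (lam * (u ⬝ᵥ N r))
      have h6 : lamMax ^ (r + 1) * (|w σ| / p σ + x * S * (1 - (1 / 2) ^ (r + 1)))
          = lamMax * (lamMax ^ r * (|w σ| / p σ + x * S * (1 - (1 / 2) ^ r)))
            + S * (x * lamMax / 2 * (lamMax / 2) ^ r) := by
        rw [show lamMax / 2 = lamMax * (1 / 2) by ring, mul_pow]
        ring
      rw [h6]
      linarith
  intro r hr
  refine (hmain r hr).trans ?_
  have hxS : 0 ≤ x * S := by positivity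
  have hh : (0 : ℝ) ≤ (1 / 2) ^ r := by positivity
  have : x * S * (1 - (1 / 2) ^ r) ≤ x * S := by nlinarith
  gcongr
end

section
/- Let p ∈ ℝ^k have all entries positive with ∑_{i=1}^k p_i = 1, let P = diag(p), and let Q be a symmetric k×k real matrix with nonnegative entries such that every entry of the matrix power Q^k is strictly positive. Then there exists λ > 0 such that: (i) there is a unique vector w ∈ ℝ^k with all entries strictly positive satisfying PQw = λw and w · (P⁻¹ w) = 1; and (ii) every real eigenvalue μ of PQ satisfies |μ| ≤ λ. -/
open scoped BigOperators
open Matrix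

lemma aux_zero {k : ℕ} (Q : Matrix (Fin k) (Fin k) ℝ) (hQ0 : ∀ i j, 0 ≤ Q i j)
    (z : Fin k → ℝ) (hz : ∀ i, 0 ≤ z i) (h : ∀ i, z i = 0 → (Q *ᵥ z) i = 0) (n : ℕ) :
    ∀ i, z i = 0 → ((Q ^ n) *ᵥ z) i = 0 := by
  induction n with
  | zero => intro i hi; simpa using hi
  | succ n ih =>
    intro i hi
    rw [pow_succ', ← Matrix.mulVec_mulVec]
    have h1 := h i hi
    simp only [Matrix.mulVec, dotProduct] at h1 ⊢
    rw [Finset.sum_eq_zero_iff_of_nonneg (fun j _ => mul_nonneg (hQ0 i j) (hz j))] at h1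
    refine Finset.sum_eq_zero fun j hj => ?_
    rcases mul_eq_zero.1 (h1 j hj) with h2 | h2
    · rw [h2, zero_mul]
    · have := ih j h2
      simp only [Matrix.mulVec, dotProduct] at this
      rw [this, mul_zero]

lemma aux_powpos {k : ℕ} (R : Matrix (Fin k) (Fin k) ℝ) (hR : ∀ i j, 0 < R i j)
    (z : Fin k → ℝ) (hz : ∀ i, 0 ≤ z i) (hz0 : z ≠ 0) (i : Fin k) : 0 < (R *ᵥ z) i := by
  obtain ⟨j, hj⟩ := Function.ne_iff.1 hz0
  exact Finset.sum_pos' (fun j _ => mul_nonneg (hR i j).le (hz j))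
    ⟨j, Finset.mem_univ _, mul_pos (hR i j) (lt_of_le_of_ne (hz j) (Ne.symm hj))⟩

lemma aux_pos_s18 {k : ℕ} (Q : Matrix (Fin k) (Fin k) ℝ) (hQ0 : ∀ i j, 0 ≤ Q i j)
    (hQk : ∀ i j, 0 < (Q ^ k) i j)
    (z : Fin k → ℝ) (hz : ∀ i, 0 ≤ z i) (hz0 : z ≠ 0) (h : ∀ i, z i = 0 → (Q *ᵥ z) i = 0) :
    ∀ i, 0 < z i := by
  intro i
  refine lt_of_le_of_ne (hz i) fun h0 => ?_
  have := aux_powpos _ hQk z hz hz0 i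
  rw [aux_zero Q hQ0 z hz h k i h0.symm] at this
  exact lt_irrefl _ this

lemma aux_quad_s18 (B C : ℝ) (hC : 0 ≤ C) (h : ∀ t : ℝ, 0 ≤ 2 * t * B + t ^ 2 * C) : B = 0 := by
  by_contra hB
  have h1 := h (-B / (C + 1))
  have h2 : 2 * (-B / (C + 1)) * B + (-B / (C + 1)) ^ 2 * C = -(B ^ 2 * (C + 2) / (C + 1) ^ 2) := by
    field_simp
    ring
  rw [h2] at h1
  have : 0 < B ^ 2 * (C + 2) / (C + 1) ^ 2 := by positivity
  linarith

lemma aux_eig {k : ℕ} (p : Fin k → ℝ) (hp : ∀ i, 0 < p i) (Q : Matrix (Fin k) (Fin k) ℝ)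
    (μ : ℝ) (v : Fin k → ℝ) :
    (Matrix.diagonal p * Q).mulVec v = μ • v ↔ ∀ i, (Q *ᵥ v) i = μ * (v i / p i) := by
  rw [funext_iff]
  refine forall_congr' fun i => ?_
  rw [← Matrix.mulVec_mulVec, Matrix.mulVec_diagonal, Pi.smul_apply, smul_eq_mul]
  have := (hp i).ne'
  rw [← mul_div_assoc, eq_div_iff this, mul_comm]

theorem statement_18 (k : ℕ) (hk : 1 ≤ k) (p : Fin k → ℝ) (hp : ∀ i, 0 < p i)
    (hpsum : ∑ i, p i = 1)
    (Q : Matrix (Fin k) (Fin k) ℝ) (hQ : Q.IsSymm) (hQ0 : ∀ i j, 0 ≤ Q i j)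
    (hQk : ∀ i j, 0 < (Q ^ k) i j) :
    ∃ lam : ℝ, 0 < lam ∧
      (∃! w : Fin k → ℝ, (∀ i, 0 < w i) ∧
        (Matrix.diagonal p * Q).mulVec w = lam • w ∧ ∑ i, w i * w i / p i = 1) ∧
      ∀ (μ : ℝ) (v : Fin k → ℝ), v ≠ 0 →
        (Matrix.diagonal p * Q).mulVec v = μ • v → |μ| ≤ lam := by
  obtain ⟨N, hN⟩ : ∃ N : (Fin k → ℝ) → ℝ, ∀ z, N z = ∑ i, z i * z i / p i := ⟨_, fun _ => rfl⟩
  obtain ⟨f, hf⟩ : ∃ f : (Fin k → ℝ) → ℝ, ∀ z, f z = z ⬝ᵥ (Q *ᵥ z) := ⟨_, fun _ => rfl⟩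
  have hNnn : ∀ z : Fin k → ℝ, ∀ i, 0 ≤ z i * z i / p i := fun z i =>
    div_nonneg (mul_self_nonneg _) (hp i).le
  have hNpos : ∀ z, z ≠ 0 → 0 < N z := by
    intro z hz
    obtain ⟨j, hj⟩ := Function.ne_iff.1 hz
    rw [hN]
    exact Finset.sum_pos' (fun i _ => hNnn z i)
      ⟨j, Finset.mem_univ _, div_pos (mul_self_pos.2 hj) (hp j)⟩
  have hNc : Continuous N := by
    rw [show N = _ from funext hN]; fun_prop
  have hfc : Continuous f := by
    rw [show f = _ from funext hf]
    simp only [dotProduct, Matrix.mulVec]; fun_prop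
  have hScomp : IsCompact {z | N z = 1} := by
    refine IsCompact.of_isClosed_subset (isCompact_Icc (a := fun _ => (-1:ℝ)) (b := fun _ => 1))
      (isClosed_eq hNc continuous_const) ?_
    intro z hz
    have hz : N z = 1 := hz
    have key : ∀ i, |z i| ≤ 1 := by
      intro i
      have h1 : z i * z i / p i ≤ 1 := by
        rw [← hz, hN]
        exact Finset.single_le_sum (f := fun i => z i * z i / p i)
          (fun i _ => hNnn z i) (Finset.mem_univ i)
      have h2 : p i ≤ 1 := by
        rw [← hpsum]
        exact Finset.single_le_sum (fun i _ => (hp i).le) (Finset.mem_univ i)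
      rw [div_le_one (hp i)] at h1
      rw [← sq_le_one_iff_abs_le_one]
      nlinarith
    exact ⟨fun i => (abs_le.1 (key i)).1, fun i => (abs_le.1 (key i)).2⟩
  have hSne : {z | N z = 1}.Nonempty := by
    refine ⟨p, ?_⟩
    show N p = 1
    rw [hN, ← hpsum]
    exact Finset.sum_congr rfl fun i _ => by rw [mul_div_assoc, div_self (hp i).ne', mul_one]
  obtain ⟨x, hx, hmax⟩ := hScomp.exists_isMaxOn hSne hfc.continuousOn
  have hx : N x = 1 := hx
  have hNsm : ∀ (s : ℝ) z, N (s • z) = s ^ 2 * N z := by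
    intro s z
    rw [hN, hN, Finset.mul_sum]
    exact Finset.sum_congr rfl fun i _ => by simp only [Pi.smul_apply, smul_eq_mul]; ring
  have hfsm : ∀ (s : ℝ) z, f (s • z) = s ^ 2 * f z := by
    intro s z
    rw [hf, hf, Matrix.mulVec_smul, smul_dotProduct, dotProduct_smul]
    simp only [smul_eq_mul]; ring
  have hle : ∀ z, f z ≤ f x * N z := by
    intro z
    by_cases hz : z = 0
    · subst hz; rw [hf, hN]; simp
    have hpos := hNpos z hz
    have h1 : (Real.sqrt (N z))⁻¹ ^ 2 = (N z)⁻¹ := by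
      rw [inv_pow, Real.sq_sqrt hpos.le]
    have h2 : f ((Real.sqrt (N z))⁻¹ • z) ≤ f x := by
      apply hmax
      show N _ = 1
      rw [hNsm, h1, inv_mul_cancel₀ hpos.ne']
    rw [hfsm, h1, inv_mul_le_iff₀ hpos] at h2
    linarith
  have hNabs : ∀ z, N (fun i => |z i|) = N z := by
    intro z
    rw [hN, hN]
    exact Finset.sum_congr rfl fun i _ => by rw [abs_mul_abs_self]
  have hfabs : ∀ z, |f z| ≤ f (fun i => |z i|) := by
    intro z
    rw [hf, hf]
    simp only [dotProduct, Matrix.mulVec]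
    refine (Finset.abs_sum_le_sum_abs _ _).trans (Finset.sum_le_sum fun i _ => ?_)
    rw [abs_mul]
    refine mul_le_mul_of_nonneg_left ?_ (abs_nonneg _)
    refine (Finset.abs_sum_le_sum_abs _ _).trans (Finset.sum_le_sum fun j _ => ?_)
    rw [abs_mul, abs_of_nonneg (hQ0 i j)]
  obtain ⟨lam, hlam⟩ : ∃ l, l = f x := ⟨_, rfl⟩
  rw [← hlam] at hle
  obtain ⟨y, hy⟩ : ∃ y : Fin k → ℝ, y = fun i => |x i| := ⟨_, rfl⟩
  have hy0 : ∀ i, 0 ≤ y i := fun i => by rw [hy]; exact abs_nonneg _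
  have hNy : N y = 1 := by rw [hy, hNabs, hx]
  have hfy : f y = lam := by
    apply le_antisymm
    · have := hle y; rwa [hNy, mul_one] at this
    · rw [hlam, hy]; exact (le_abs_self _).trans (hfabs x)
  have hyne : y ≠ 0 := by
    rintro rfl
    rw [hN] at hNy
    simp at hNy
  have heig : ∀ i, (Q *ᵥ y) i = lam * (y i / p i) := by
    intro i
    obtain ⟨e, he⟩ : ∃ e : Fin k → ℝ, e = Pi.single i 1 := ⟨_, rfl⟩
    have hNadd : ∀ t : ℝ, N (y + t • e) = N y + 2 * t * (y i / p i) + t ^ 2 * N e := by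
      intro t
      have : y i / p i = ∑ j, y j * e j / p j := by
        rw [Finset.sum_eq_single i]
        · simp [he]
        · intro j _ hj; simp [he, hj]
        · simp
      rw [this, hN, hN, hN, Finset.mul_sum, Finset.mul_sum, ← Finset.sum_add_distrib,
        ← Finset.sum_add_distrib]
      exact Finset.sum_congr rfl fun j _ => by
        simp only [Pi.add_apply, Pi.smul_apply, smul_eq_mul]; ring
    have hfadd : ∀ t : ℝ, f (y + t • e) = f y + 2 * t * ((Q *ᵥ y) i) + t ^ 2 * f e := by
      intro t
      have h1 : e ⬝ᵥ (Q *ᵥ y) = (Q *ᵥ y) i := by rw [he]; simp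
      have h2 : y ⬝ᵥ (Q *ᵥ e) = (Q *ᵥ y) i := by
        rw [Matrix.dotProduct_mulVec, ← Matrix.mulVec_transpose, hQ.eq, dotProduct_comm, h1]
      rw [hf, hf, hf, Matrix.mulVec_add, Matrix.mulVec_smul]
      simp only [add_dotProduct, dotProduct_add, smul_dotProduct, dotProduct_smul, smul_eq_mul,
        h1, h2]
      ring
    have := aux_quad_s18 (lam * (y i / p i) - (Q *ᵥ y) i) (lam * N e - f e)
      (sub_nonneg.2 (hle e)) (by
        intro t
        have h := hle (y + t • e)
        rw [hNadd, hfadd, hfy, hNy] at h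
        linarith)
    linarith
  have hyz : ∀ z : Fin k → ℝ, (∀ i, (Q *ᵥ z) i = lam * (z i / p i)) →
      ∀ i, z i = 0 → (Q *ᵥ z) i = 0 := by
    intro z hz i hi
    rw [hz, hi]; simp
  have hypos := aux_pos_s18 Q hQ0 hQk y hy0 hyne (hyz y heig)
  have hlampos : 0 < lam := by
    refine lt_of_le_of_ne ?_ ?_
    · rw [← hfy, hf]
      simp only [dotProduct, Matrix.mulVec]
      exact Finset.sum_nonneg fun i _ => mul_nonneg (hy0 i)
        (Finset.sum_nonneg fun j _ => mul_nonneg (hQ0 i j) (hy0 j))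
    · intro h0
      have h1 : Q *ᵥ y = 0 := by
        ext i; rw [heig, ← h0]; simp
      have h2 := aux_powpos _ hQk y hy0 hyne ⟨0, hk⟩
      obtain ⟨m, rfl⟩ : ∃ m, k = m + 1 := ⟨k - 1, by omega⟩
      rw [pow_succ, ← Matrix.mulVec_mulVec, h1] at h2
      simp at h2
  refine ⟨lam, hlampos, ⟨y, ⟨hypos, (aux_eig p hp Q lam y).2 heig, by rw [← hN, hNy]⟩, ?_⟩, ?_⟩
  · rintro w ⟨hw, hwe, hwn⟩
    rw [aux_eig p hp] at hwe
    rw [← hN] at hwn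
    haveI : Nonempty (Fin k) := ⟨⟨0, hk⟩⟩
    obtain ⟨i, hi⟩ := Finite.exists_min (fun i => w i / y i)
    obtain ⟨t, ht⟩ : ∃ t, t = w i / y i := ⟨_, rfl⟩
    have htpos : 0 < t := by rw [ht]; exact div_pos (hw i) (hypos i)
    have hz : w - t • y = 0 := by
      by_contra hne
      have h1 : ∀ j, 0 ≤ (w - t • y) j := by
        intro j
        have := hi j
        simp only [← ht] at this
        rw [le_div_iff₀ (hypos j)] at this
        simpa using this
      have h2 := aux_pos_s18 Q hQ0 hQk (w - t • y) h1 hne (hyz _ (by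
        intro j
        rw [Matrix.mulVec_sub, Matrix.mulVec_smul]
        simp only [Pi.sub_apply, Pi.smul_apply, smul_eq_mul]
        rw [hwe, heig]; ring)) i
      have h3 : t * y i = w i := by rw [ht, div_mul_cancel₀ _ (hypos i).ne']
      simp [h3] at h2
    have hw' : w = t • y := sub_eq_zero.1 hz
    rw [hw', hNsm, hNy, mul_one] at hwn
    have : t = 1 := by nlinarith
    rw [hw', this, one_smul]
  · intro μ v hv hve
    rw [aux_eig p hp] at hve
    have h1 : f v = μ * N v := by
      rw [hf, hN, Finset.mul_sum]
      exact Finset.sum_congr rfl fun i _ => by rw [hve]; ring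
    have h2 := hfabs v
    have h3 := hle (fun i => |v i|)
    have hpos := hNpos v hv
    rw [hNabs] at h3
    rw [h1, abs_mul, abs_of_pos hpos] at h2
    exact le_of_mul_le_mul_right (h2.trans h3) hpos
end
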